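/- arXiv:0903.4601 — 2 statements merged into one kernel-verified Lean document; each statement's English description precedes it below -/
import Mathlib

section
/- Let w be a word of length n in the letters u_1^{±1}, ..., u_N^{±1} whose cyclic reduction has positive length. Then there is a unique non-crossing half-pairing on [n] which is w-admissible. -/
namespace NCC

/-- A letter `u_i^{±1}`: a generator index together with a sign. -/
abbrev Letter (N : ℕ) := Fin N × Bool

/-- The inverse of a letter. -/
def linv {N : ℕ} (l : Letter N) : Letter N := (l.1, !l.2)

/-- One cyclic reduction step: either a linear reduction step (removal of two
adjacent letters which are inverses of each other), or removal of the first and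
last letters when they are inverses of each other. -/
def CyclicStep {N : ℕ} (w w' : List (Letter N)) : Prop :=
  FreeGroup.Red.Step w w' ∨
    ∃ (l : Letter N) (m : List (Letter N)), w = l :: (m ++ [linv l]) ∧ w' = m

/-- `w` reduces cyclically (in zero or more steps) to `v`. -/
def CycReducesTo {N : ℕ} (w v : List (Letter N)) : Prop :=
  Relation.ReflTransGen CyclicStep w v

/-- A word is linearly reduced when no two adjacent letters are inverses of
each other. -/
def LinReduced {N : ℕ} (w : List (Letter N)) : Prop :=
  List.Chain' (fun a b => b ≠ linv a) w

/-- A word is cyclically reduced iff `w ++ w` is linearly reduced, i.e. it is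
linearly reduced and its last letter is not the inverse of its first letter. -/
def CycReduced {N : ℕ} (w : List (Letter N)) : Prop :=
  LinReduced (w ++ w)

/-- A word is reducible to 1 if it linearly reduces to the empty word. -/
def ReducibleToOne {N : ℕ} (w : List (Letter N)) : Prop :=
  FreeGroup.Red w []

/-- A word has good reduction: no nonempty prefix is reducible to 1, and its
linear reduction is cyclically reduced. -/
def GoodReduction {N : ℕ} (w : List (Letter N)) : Prop :=
  (∀ s, s <+: w → s ≠ [] → ¬ ReducibleToOne s) ∧
    CycReduced (FreeGroup.reduce w)

/-- The first `i` letters of the infinite word `w_∞ = w w w ⋯`. -/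
def infTake {N : ℕ} (w : List (Letter N)) (i : ℕ) : List (Letter N) :=
  ((List.replicate i w).flatten).take i

open scoped Classical

/-- `i` and `j` lie in a common block of the partition `P`. -/
def Rel {n : ℕ} (P : Finpartition (Finset.univ : Finset (Fin n))) (i j : Fin n) : Prop :=
  ∃ B ∈ P.parts, i ∈ B ∧ j ∈ B

/-- `i` lies in a singleton block of `P`. -/
def IsSingleton {n : ℕ} (P : Finpartition (Finset.univ : Finset (Fin n))) (i : Fin n) : Prop :=
  ∃ B ∈ P.parts, i ∈ B ∧ B.card = 1

/-- The relation of the partition `π̃` obtained from `P` by merging all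
singleton blocks into a single block. -/
def RelTilde {n : ℕ} (P : Finpartition (Finset.univ : Finset (Fin n))) (i j : Fin n) : Prop :=
  Rel P i j ∨ (IsSingleton P i ∧ IsSingleton P j)

/-- An equivalence-like relation on `[n]` is non-crossing when there are no
`i₁ < i₂ < i₃ < i₄` with `i₁ ∼ i₃`, `i₂ ∼ i₄` but `i₁ ≁ i₂`. -/
def NonCrossingRel {n : ℕ} (r : Fin n → Fin n → Prop) : Prop :=
  ∀ i1 i2 i3 i4 : Fin n, i1 < i2 → i2 < i3 → i3 < i4 → r i1 i3 → r i2 i4 → r i1 i2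

/-- A non-crossing half-pairing on `[n]`: a non-crossing partition all of whose
blocks have at most two elements, with at least one singleton block (through
string), such that merging all singleton blocks still gives a non-crossing
partition. -/
structure HalfPairing (n : ℕ) where
  P : Finpartition (Finset.univ : Finset (Fin n))
  card_le : ∀ B ∈ P.parts, B.card ≤ 2
  exists_singleton : ∃ i, IsSingleton P i
  nc : NonCrossingRel (Rel P)
  nc_tilde : NonCrossingRel (RelTilde P)

/-- `r` and `s` form a pair (a two-element block) of `π`. -/
def Pairs {n : ℕ} (π : HalfPairing n) (r s : Fin n) : Prop :=
  r ≠ s ∧ Rel π.P r s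

/-- Membership in the cyclic interval `[i, j]` (going clockwise from `i` to
`j`, endpoints included). -/
def InCyc {n : ℕ} (i j x : Fin n) : Prop :=
  (x.val + n - i.val) % n ≤ (j.val + n - i.val) % n

/-- Cyclic successor of `i` in `[n]`. -/
def cnext {n : ℕ} (i : Fin n) : Fin n :=
  ⟨(i.val + 1) % n, Nat.mod_lt _ i.pos⟩

/-- Cyclic predecessor of `i` in `[n]`. -/
def cprev {n : ℕ} (i : Fin n) : Fin n :=
  ⟨(i.val + n - 1) % n, Nat.mod_lt _ i.pos⟩

/-- `a + j` modulo `n`. -/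
def cadd {n : ℕ} (a j : Fin n) : Fin n :=
  ⟨(a.val + j.val) % n, Nat.mod_lt _ a.pos⟩

/-- `x - a` modulo `n`. -/
def csub {n : ℕ} (x a : Fin n) : Fin n :=
  ⟨(x.val + n - a.val) % n, Nat.mod_lt _ a.pos⟩

/-- `i` has the outward orientation: it is a singleton, or it is the point of a
pair `(i, s)` such that the cyclic interval `[i, s]` contains no singleton. -/
def OutOriented {n : ℕ} (π : HalfPairing n) (i : Fin n) : Prop :=
  IsSingleton π.P i ∨
    ∃ s, Pairs π i s ∧ ∀ x, InCyc i s x → ¬ IsSingleton π.P x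

/-- `i` covers `j`: both are outward oriented, and either `j` is the cyclic
successor of `i`, or `π` pairs each point of the cyclic interval
`[i+1, j-1]` with another point of `[i+1, j-1]`. -/
def Covers {n : ℕ} (π : HalfPairing n) (i j : Fin n) : Prop :=
  OutOriented π i ∧ OutOriented π j ∧
    (j = cnext i ∨
      ∀ x, InCyc (cnext i) (cprev j) x →
        ∃ y, y ≠ x ∧ InCyc (cnext i) (cprev j) y ∧ Pairs π x y)

/-- The set of through strings (singleton blocks) of `π`. -/
noncomputable def throughFinset {n : ℕ} (π : HalfPairing n) : Finset (Fin n) :=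
  Finset.univ.filter (fun i => IsSingleton π.P i)

/-- The word formed by the letters of `w` at the through strings of `π`,
read in increasing order of position. -/
noncomputable def throughWord {n N : ℕ} (w : Fin n → Letter N) (π : HalfPairing n) :
    List (Letter N) :=
  ((throughFinset π).sort (· ≤ ·)).map w

/-- `π` is a `w`-pairing: paired positions carry mutually inverse letters, and
the through-string letters, read in order, form a cyclic reduction of `w`. -/
def IsWPairing {n N : ℕ} (w : Fin n → Letter N) (π : HalfPairing n) : Prop :=
  (∀ r s, Pairs π r s → w r = linv (w s)) ∧
    CycReducesTo (List.ofFn w) (throughWord w π) ∧ CycReduced (throughWord w π)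

/-- `π` is `w`-admissible: it is a `w`-pairing and `l_i ≠ l_j⁻¹` whenever
`i` covers `j`. -/
def Admissible {n N : ℕ} (w : Fin n → Letter N) (π : HalfPairing n) : Prop :=
  IsWPairing w π ∧ ∀ i j, Covers π i j → w i ≠ linv (w j)

/-!
Repeat `w` to a periodic word on `ℤ` and read it from left to right, cancelling inverse neighbors
on a stack. Half-pairings of `[n]` are the `n`-periodic arc diagrams on `ℤ` with an unmatched
point, where pairs become arcs, through strings become unmatched points, and an outward point is
one that is not the right end of an arc.

The word under an arc is trivial in the free group, and admissibility prevents the letter at an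
outward point from being cancelled on arrival. Read from an unmatched point, the stack therefore
grows exactly at the outward points, and these determine the diagram. Far enough to the right, the
place where the reading started no longer affects whether the stack grows or shrinks, so by
periodicity there is at most one admissible diagram.

Conversely, since the cyclic reduction of `w` is not empty, the height of the stack started at `0`
tends to infinity, and it eventually gains a constant positive amount per period. Extended to `ℤ`,
it is a lattice path with positive drift. Joining each up-step to the down-step by which the path
first returns gives the admissible diagram. Its unmatched points spell a cyclic reduction of `w`,
because the word between two consecutive ones is trivial.
-/

/-! ### Integer intervals as lists -/

/-- The integers of the half-open interval `[a, b)`, in increasing order. -/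
def intIco (a b : ℤ) : List ℤ := (List.range (b - a).toNat).map fun i : ℕ => a + i

@[simp]
theorem intIco_self (a : ℤ) : intIco a a = [] := by simp [intIco]

theorem intIco_append {a b c : ℤ} (hab : a ≤ b) (hbc : b ≤ c) :
    intIco a b ++ intIco b c = intIco a c := by
  have hsum : (c - a).toNat = (b - a).toNat + (c - b).toNat := by omega
  have hshift : ∀ i : ℕ, b + i = a + ((b - a).toNat + i : ℕ) := by omega
  simp only [intIco, hsum, List.range_add, List.map_append, List.map_map, hshift]
  rfl

theorem intIco_succ_right {a b : ℤ} (hab : a ≤ b) : intIco a (b + 1) = intIco a b ++ [b] := by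
  rw [← intIco_append hab (by omega : b ≤ b + 1)]
  simp [intIco]

@[simp]
theorem mem_intIco {a b x : ℤ} : x ∈ intIco a b ↔ a ≤ x ∧ x < b := by
  simp only [intIco, List.mem_map, List.mem_range]
  exact ⟨by rintro ⟨i, hi, rfl⟩; omega, fun h => ⟨(x - a).toNat, by omega, by omega⟩⟩

theorem map_add_intIco (a b t : ℤ) : (intIco a b).map (· + t) = intIco (a + t) (b + t) := by
  rw [intIco, intIco, List.map_map, add_sub_add_right_eq_sub]
  exact List.map_congr_left fun i _ => add_right_comm a (i : ℤ) t

theorem intIco_zero_natCast (n : ℕ) :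
    intIco 0 n = (List.finRange n).map fun i : Fin n => ((i : ℕ) : ℤ) := by
  rw [intIco, sub_zero, Int.toNat_natCast, ← List.map_coe_finRange_eq_range, List.map_map]
  exact List.map_congr_left fun i _ => zero_add ((i : ℕ) : ℤ)

/-- The factor of the bi-infinite word `W` at the positions in `[a, b)`. -/
def segment {α : Type*} (W : ℤ → α) (a b : ℤ) : List α := (intIco a b).map W

@[simp]
theorem segment_self {α : Type*} (W : ℤ → α) (a : ℤ) : segment W a a = [] := by simp [segment]

theorem segment_append {α : Type*} (W : ℤ → α) {a b c : ℤ} (hab : a ≤ b) (hbc : b ≤ c) :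
    segment W a b ++ segment W b c = segment W a c := by
  rw [segment, segment, ← List.map_append, intIco_append hab hbc, segment]

theorem segment_succ_right {α : Type*} (W : ℤ → α) {a b : ℤ} (hab : a ≤ b) :
    segment W a (b + 1) = segment W a b ++ [W b] := by
  simp [segment, intIco_succ_right hab]

theorem segment_add_period {α : Type*} {W : ℤ → α} {p : ℤ} (hW : Function.Periodic W p)
    (a b : ℤ) : segment W (a + p) (b + p) = segment W a b := by
  rw [segment, ← map_add_intIco, List.map_map]
  exact List.map_congr_left fun x _ => hW x

/-! ### The cancelling stack -/

section Stack

variable {N : ℕ}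

@[simp]
theorem linv_linv (a : Letter N) : linv (linv a) = a := by simp [linv]

theorem mk_linv (a : Letter N) : FreeGroup.mk [linv a] = (FreeGroup.mk [a])⁻¹ := by
  rw [FreeGroup.inv_mk]
  rfl

theorem isReduced_iff_linReduced {l : List (Letter N)} :
    FreeGroup.IsReduced l ↔ LinReduced l := by
  have hletters : ∀ a b : Letter N, (a.1 = b.1 → a.2 = b.2) ↔ b ≠ linv a := by
    rintro ⟨i, x⟩ ⟨j, y⟩
    cases x <;> cases y <;> simp [linv, eq_comm]
  simp only [FreeGroup.IsReduced, hletters]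
  exact Iff.rfl

/-- One move of left-to-right cancellation on a stack whose top is the head of the list: the
letter `a` cancels against the top if that is `a⁻¹`, and is put on top otherwise. -/
def push : List (Letter N) → Letter N → List (Letter N)
  | [], a => [a]
  | b :: s, a => if b = linv a then s else a :: b :: s

/-- The stack obtained from the stack `s` by reading the letters of `l` from left to right. -/
def pushAll (s l : List (Letter N)) : List (Letter N) := l.foldl push s

@[simp]
theorem pushAll_nil (s : List (Letter N)) : pushAll s [] = s := rfl

theorem pushAll_append (s l l' : List (Letter N)) :
    pushAll s (l ++ l') = pushAll (pushAll s l) l' := List.foldl_append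

theorem pushAll_concat (s l : List (Letter N)) (a : Letter N) :
    pushAll s (l ++ [a]) = push (pushAll s l) a := pushAll_append s l [a]

@[simp]
theorem push_nil (a : Letter N) : push [] a = [a] := rfl

@[simp]
theorem push_linv_cons (a : Letter N) (s : List (Letter N)) : push (linv a :: s) a = s := by
  simp [push]

theorem push_cons_of_ne {a b : Letter N} (h : b ≠ linv a) (s : List (Letter N)) :
    push (b :: s) a = a :: b :: s := by
  simp [push, h]

theorem push_eq_cons_or_eq_linv_cons (s : List (Letter N)) (a : Letter N) :
    push s a = a :: s ∨ s = linv a :: push s a := by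
  rcases s with - | ⟨b, s⟩
  · exact Or.inl rfl
  · by_cases h : b = linv a
    · simp [h]
    · exact Or.inl (push_cons_of_ne h s)

theorem length_push (s : List (Letter N)) (a : Letter N) :
    (push s a).length = s.length + 1 ∨ (push s a).length + 1 = s.length := by
  rcases push_eq_cons_or_eq_linv_cons s a with h | h
  · exact Or.inl (by rw [h, List.length_cons])
  · exact Or.inr (by conv_rhs => rw [h, List.length_cons])

theorem push_eq_cons_of_length_eq {s : List (Letter N)} {a : Letter N}
    (h : (push s a).length = s.length + 1) : push s a = a :: s := by
  refine (push_eq_cons_or_eq_linv_cons s a).resolve_right fun hs => ?_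
  have := congrArg List.length hs
  rw [List.length_cons] at this
  omega

theorem eq_linv_cons_push_of_length_eq {s : List (Letter N)} {a : Letter N}
    (h : (push s a).length + 1 = s.length) : s = linv a :: push s a := by
  refine (push_eq_cons_or_eq_linv_cons s a).resolve_left fun hs => ?_
  rw [hs, List.length_cons] at h
  omega

theorem exists_push_append_eq {u : List (Letter N)} (hu : u ≠ []) (a : Letter N) :
    ∃ u', ∀ s, push (u ++ s) a = u' ++ s := by
  obtain ⟨b, t, rfl⟩ := List.exists_cons_of_ne_nil hu
  by_cases hb : b = linv a
  · exact ⟨t, fun s => by simp [hb]⟩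
  · exact ⟨a :: b :: t, fun s => push_cons_of_ne hb _⟩

/-- Reading the same letters from two initial stacks, here `s` and the empty one, the results
agree except for bottom parts whose total size never grows. -/
theorem exists_pushAll_eq_append (s l : List (Letter N)) :
    ∃ u x y, pushAll s l = u ++ x ∧ pushAll [] l = u ++ y ∧ x.length + y.length ≤ s.length := by
  induction l using List.reverseRecOn with
  | nil => exact ⟨[], s, [], by simp⟩
  | append_singleton l a ih =>
    obtain ⟨u, x, y, hx, hy, hlen⟩ := ih
    rw [pushAll_concat, pushAll_concat, hx, hy]
    by_cases hu : u = []
    · subst hu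
      rcases push_eq_cons_or_eq_linv_cons x a with hxa | hxa <;>
        rcases push_eq_cons_or_eq_linv_cons y a with hya | hya
      · exact ⟨[a], x, y, hxa, hya, hlen⟩
      all_goals
        refine ⟨[], push x a, push y a, rfl, rfl, ?_⟩
        have hxl := congrArg List.length hxa
        have hyl := congrArg List.length hya
        rw [List.length_cons] at hxl hyl
        omega
    · obtain ⟨u', hu'⟩ := exists_push_append_eq hu a
      exact ⟨u', x, y, hu' x, hu' y, hlen⟩

theorem length_pushAll_le (s l : List (Letter N)) :
    (pushAll s l).length ≤ (pushAll [] l).length + s.length := by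
  obtain ⟨u, x, y, hx, hy, hlen⟩ := exists_pushAll_eq_append s l
  rw [hx, hy, List.length_append, List.length_append]
  omega

/-- Once the run from the empty stack is higher than `s`, it shares its top with the run from
`s`, so that both heights change in the same way. -/
theorem length_pushAll_concat_add {s l : List (Letter N)}
    (h : s.length < (pushAll [] l).length) (a : Letter N) :
    (pushAll s (l ++ [a])).length + (pushAll [] l).length =
      (pushAll [] (l ++ [a])).length + (pushAll s l).length := by
  obtain ⟨u, x, y, hx, hy, hlen⟩ := exists_pushAll_eq_append s l
  have hu : u ≠ [] := by
    rintro rfl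
    rw [hy, List.nil_append] at h
    omega
  obtain ⟨u', hu'⟩ := exists_push_append_eq hu a
  rw [pushAll_concat, pushAll_concat, hx, hy, hu', hu']
  simp only [List.length_append]
  omega

theorem exists_pushAll_eq_append_self (s l : List (Letter N))
    (h : ∀ l', l' <+: l → s.length ≤ (pushAll s l').length) : ∃ u, pushAll s l = u ++ s := by
  induction l using List.reverseRecOn with
  | nil => exact ⟨[], rfl⟩
  | append_singleton l a ih =>
    obtain ⟨u, hu⟩ := ih fun l' hl' => h l' (hl'.trans (List.prefix_append l [a]))
    have hlast := h _ List.prefix_rfl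
    rw [pushAll_concat, hu] at hlast ⊢
    by_cases hnil : u = []
    · subst hnil
      rw [List.nil_append] at hlast ⊢
      rcases length_push s a with hlen | hlen
      · exact ⟨[a], push_eq_cons_of_length_eq hlen⟩
      · omega
    · obtain ⟨u', hu'⟩ := exists_push_append_eq hnil a
      exact ⟨u', hu' s⟩

theorem mk_reverse_push (s : List (Letter N)) (a : Letter N) :
    FreeGroup.mk (push s a).reverse = FreeGroup.mk s.reverse * FreeGroup.mk [a] := by
  rcases push_eq_cons_or_eq_linv_cons s a with h | h
  · rw [h, List.reverse_cons, FreeGroup.mul_mk]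
  · conv_rhs => rw [h]
    rw [List.reverse_cons, ← FreeGroup.mul_mk, mk_linv, inv_mul_cancel_right]

theorem mk_reverse_pushAll (l : List (Letter N)) :
    FreeGroup.mk (pushAll [] l).reverse = FreeGroup.mk l := by
  induction l using List.reverseRecOn with
  | nil => rfl
  | append_singleton l a ih => rw [pushAll_concat, mk_reverse_push, ih, FreeGroup.mul_mk]

theorem LinReduced.push {s : List (Letter N)} (hs : LinReduced s) (a : Letter N) :
    LinReduced (push s a) := by
  rcases s with - | ⟨b, s⟩
  · exact List.isChain_singleton _
  · by_cases hb : b = linv a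
    · rw [hb, push_linv_cons]
      exact List.IsChain.tail hs
    · rw [push_cons_of_ne hb]
      exact List.isChain_cons_cons.2 ⟨hb, hs⟩

theorem linReduced_pushAll (l : List (Letter N)) : LinReduced (pushAll [] l) := by
  induction l using List.reverseRecOn with
  | nil => exact List.isChain_nil
  | append_singleton l a ih => rw [pushAll_concat]; exact ih.push a

theorem pushAll_nil_eq_reverse_toWord (l : List (Letter N)) :
    pushAll [] l = (FreeGroup.mk l).toWord.reverse := by
  have hred : FreeGroup.IsReduced (pushAll [] l).reverse :=
    List.isChain_reverse.2 ((isReduced_iff_linReduced.2 (linReduced_pushAll l)).imp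
      fun a b h h' => (h h'.symm).symm)
  rw [← mk_reverse_pushAll, FreeGroup.toWord_mk, hred.reduce_eq, List.reverse_reverse]

/-- The stack after reading the letters of `W` at the positions in `[c, x)`. -/
def stack (W : ℤ → Letter N) (c x : ℤ) : List (Letter N) := pushAll [] (segment W c x)

theorem length_stack (W : ℤ → Letter N) (c x : ℤ) :
    (stack W c x).length = (FreeGroup.mk (segment W c x)).norm := by
  rw [stack, pushAll_nil_eq_reverse_toWord, List.length_reverse, FreeGroup.norm]

theorem stack_succ (W : ℤ → Letter N) {c x : ℤ} (h : c ≤ x) :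
    stack W c (x + 1) = push (stack W c x) (W x) := by
  rw [stack, segment_succ_right W h, pushAll_concat, stack]

theorem length_stack_succ (W : ℤ → Letter N) {c x : ℤ} (h : c ≤ x) :
    (stack W c (x + 1)).length = (stack W c x).length + 1 ∨
      (stack W c (x + 1)).length + 1 = (stack W c x).length := by
  rw [stack_succ W h]
  exact length_push _ _

theorem stack_succ_eq_cons {W : ℤ → Letter N} {c x : ℤ} (h : c ≤ x)
    (hlen : (stack W c (x + 1)).length = (stack W c x).length + 1) :
    stack W c (x + 1) = W x :: stack W c x := by
  rw [stack_succ W h] at hlen ⊢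
  exact push_eq_cons_of_length_eq hlen

theorem stack_eq_linv_cons {W : ℤ → Letter N} {c x : ℤ} (h : c ≤ x)
    (hlen : (stack W c (x + 1)).length + 1 = (stack W c x).length) :
    stack W c x = linv (W x) :: stack W c (x + 1) := by
  rw [stack_succ W h] at hlen ⊢
  exact eq_linv_cons_push_of_length_eq hlen

theorem stack_eq_pushAll_stack (W : ℤ → Letter N) {a b c : ℤ} (hab : a ≤ b) (hbc : b ≤ c) :
    stack W a c = pushAll (stack W a b) (segment W b c) := by
  rw [stack, ← segment_append W hab hbc, pushAll_append, stack]

theorem stack_add_period {W : ℤ → Letter N} {p : ℤ} (hW : Function.Periodic W p) (c x : ℤ) :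
    stack W (c + p) (x + p) = stack W c x := by
  rw [stack, segment_add_period hW, stack]

theorem stack_eq_of_mk_segment_eq_one {W : ℤ → Letter N} {a b c : ℤ} (hca : c ≤ a)
    (hab : a ≤ b) (h : FreeGroup.mk (segment W a b) = 1) : stack W c b = stack W c a := by
  rw [stack, stack, pushAll_nil_eq_reverse_toWord, pushAll_nil_eq_reverse_toWord,
    ← segment_append W hca hab, ← FreeGroup.mul_mk, h, mul_one]

theorem length_stack_succ_add {W : ℤ → Letter N} {a c x : ℤ} (hac : a ≤ c) (hcx : c ≤ x)
    (h : (stack W a c).length < (stack W c x).length) :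
    (stack W a (x + 1)).length + (stack W c x).length =
      (stack W c (x + 1)).length + (stack W a x).length := by
  have hconcat := length_pushAll_concat_add h (W x)
  rwa [← segment_succ_right W hcx, ← stack_eq_pushAll_stack W hac (by omega),
    ← stack_eq_pushAll_stack W hac hcx] at hconcat

theorem stack_eq_of_length_eq {W : ℤ → Letter N} {c a b : ℤ} (hca : c ≤ a) (hab : a ≤ b)
    (hlow : ∀ x, a ≤ x → x ≤ b → (stack W c a).length ≤ (stack W c x).length)
    (hlen : (stack W c b).length = (stack W c a).length) : stack W c b = stack W c a := by
  obtain ⟨u, hu⟩ := exists_pushAll_eq_append_self (stack W c a) (segment W a b) fun l hl => by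
    obtain ⟨l', hl'⟩ := hl
    have hle : l.length ≤ (b - a).toNat := by
      have := congrArg List.length hl'
      simp only [segment, intIco, List.length_append, List.length_map, List.length_range] at this
      omega
    have hseg : segment W a (a + l.length) = l := by
      rw [← segment_append W (by omega : a ≤ a + l.length) (by omega : a + l.length ≤ b)] at hl'
      exact (List.append_inj_left hl' (by simp [segment, intIco])).symm
    rw [← hseg, ← stack_eq_pushAll_stack W hca (by omega)]
    exact hlow _ (by omega) (by omega)
  rw [← stack_eq_pushAll_stack W hca hab] at hu
  rw [hu, List.length_append, Nat.add_eq_right, List.length_eq_zero_iff] at hlen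
  rw [hu, hlen, List.nil_append]

end Stack

/-! ### Growth of the stack along a periodic word -/

section Growth

open Filter

variable {N : ℕ}

theorem CycReduced.isCyclicallyReduced {v : List (Letter N)} (hv : CycReduced v) :
    FreeGroup.IsCyclicallyReduced v := by
  have h := isReduced_iff_linReduced.2 hv
  rw [FreeGroup.IsReduced, List.isChain_append] at h
  exact ⟨h.1, h.2.2⟩

theorem CycReducesTo.exists_mk_eq_conj {w v : List (Letter N)} (h : CycReducesTo w v) :
    ∃ g : FreeGroup (Fin N), FreeGroup.mk w = g * FreeGroup.mk v * g⁻¹ := by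
  induction h with
  | refl => exact ⟨1, by simp⟩
  | tail _ hstep ih =>
    obtain ⟨g, hg⟩ := ih
    rcases hstep with hred | ⟨l, m, rfl, rfl⟩
    · exact ⟨g, hg.trans (congrArg (g * · * g⁻¹) (Quot.sound hred))⟩
    · refine ⟨g * FreeGroup.mk [l], ?_⟩
      rw [hg, ← List.singleton_append, ← FreeGroup.mul_mk, ← FreeGroup.mul_mk, mk_linv]
      group

theorem CycReduced.norm_mk_pow {v : List (Letter N)} (hv : CycReduced v) (k : ℕ) :
    ((FreeGroup.mk v) ^ k).norm = k * v.length := by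
  have hred := (hv.isCyclicallyReduced.flatten_replicate k).isReduced
  rw [FreeGroup.pow_mk, FreeGroup.norm, FreeGroup.toWord_mk, hred.reduce_eq]
  simp

theorem tendsto_norm_pow_of_cycReducesTo {w v : List (Letter N)} (hwv : CycReducesTo w v)
    (hv : CycReduced v) (hpos : 0 < v.length) :
    Tendsto (fun k : ℕ => ((FreeGroup.mk w) ^ k).norm) atTop atTop := by
  obtain ⟨g, hg⟩ := hwv.exists_mk_eq_conj
  refine tendsto_atTop_mono (fun k => ?_) (tendsto_sub_atTop_nat (2 * g.norm))
  have hconj : (FreeGroup.mk v) ^ k = g⁻¹ * (FreeGroup.mk w) ^ k * g := by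
    rw [hg, conj_pow]
    group
  have hk : k ≤ k * v.length := Nat.le_mul_of_pos_right k hpos
  rw [← hv.norm_mk_pow, hconj] at hk
  have hright := FreeGroup.norm_mul_le (g⁻¹ * (FreeGroup.mk w) ^ k) g
  have hleft := FreeGroup.norm_mul_le g⁻¹ ((FreeGroup.mk w) ^ k)
  rw [FreeGroup.norm_inv_eq] at hleft
  omega

variable {W : ℤ → Letter N} {p : ℤ}

theorem mk_segment_natCast_mul (hW : Function.Periodic W p) (hp : 0 ≤ p) (k : ℕ) :
    FreeGroup.mk (segment W 0 (k * p)) = (FreeGroup.mk (segment W 0 p)) ^ k := by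
  induction k with
  | zero => simp [FreeGroup.one_eq_mk]
  | succ k ih =>
    have hshift := segment_add_period (hW.nat_mul k) 0 p
    have hend : (k : ℤ) * p ≤ p + k * p := by omega
    rw [zero_add] at hshift
    rw [pow_succ, ← ih, ← hshift, FreeGroup.mul_mk, segment_append W (by positivity) hend]
    push_cast
    ring_nf

/-- The stack height is the length of the reduced form of `g ^ k`, with `g` the group element
read along a period, up to a bounded error. -/
theorem tendsto_length_stack (hW : Function.Periodic W p) (hp : 0 < p)
    (hgrow : Tendsto (fun k : ℕ => ((FreeGroup.mk (segment W 0 p)) ^ k).norm) atTop atTop) :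
    Tendsto (fun x : ℤ => (stack W 0 x).length) atTop atTop := by
  refine tendsto_atTop.2 fun B => ?_
  obtain ⟨K, hK⟩ := eventually_atTop.1 (tendsto_atTop.1 hgrow (B + p.toNat))
  filter_upwards [eventually_ge_atTop (K * p)] with x hx
  obtain ⟨k, hk⟩ := Int.eq_ofNat_of_zero_le
    (Int.ediv_nonneg ((by positivity : 0 ≤ K * p).trans hx) hp.le)
  have hKk : K ≤ k := by
    have := (Int.le_ediv_iff_mul_le hp).2 hx
    omega
  have hdiv := Int.mul_ediv_add_emod x p
  have hlt := Int.emod_lt_of_pos x hp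
  have hnonneg := Int.emod_nonneg x hp.ne'
  rw [hk, mul_comm] at hdiv
  have hfactor : (FreeGroup.mk (segment W 0 p)) ^ k =
      FreeGroup.mk (segment W 0 x) * (FreeGroup.mk (segment W (k * p) x))⁻¹ := by
    rw [eq_mul_inv_iff_mul_eq, ← mk_segment_natCast_mul hW hp.le, FreeGroup.mul_mk,
      segment_append W (by positivity) (by omega)]
  have hnorm := FreeGroup.norm_mul_le (FreeGroup.mk (segment W 0 x))
    (FreeGroup.mk (segment W (k * p) x))⁻¹
  have hrest : (FreeGroup.mk (segment W (k * p) x)).norm ≤ (x - k * p).toNat :=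
    FreeGroup.norm_mk_le.trans (by simp [segment, intIco])
  rw [← hfactor, FreeGroup.norm_inv_eq] at hnorm
  have hpow := hK k hKk
  rw [length_stack]
  omega

theorem pos_of_tendsto_of_add_period {f : ℤ → ℕ} (hf : Tendsto f atTop atTop) {J m : ℤ}
    (hp : 0 < p) (h : ∀ x, J ≤ x → (f (x + p) : ℤ) = f x + m) : 0 < m := by
  by_contra! hm
  have hbounded : ∀ k : ℕ, f (J + k * p) ≤ f J := by
    intro k
    induction k with
    | zero => simp
    | succ k ih =>
      have hk := h (J + k * p) (by nlinarith)
      rw [show J + ((k + 1 : ℕ) : ℤ) * p = J + k * p + p by push_cast; ring]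
      omega
  have hsub : Tendsto (fun k : ℕ => J + (k : ℤ) * p) atTop atTop :=
    tendsto_atTop_add_const_left _ _ (tendsto_natCast_atTop_atTop.atTop_mul_const' hp)
  obtain ⟨k, hk⟩ := ((hf.comp hsub).eventually_gt_atTop (f J)).exists
  exact (hbounded k).not_gt hk

/-- The runs started at the two ends of a period eventually share their top, so from then on the
height gained over a period is constant. -/
theorem exists_length_stack_add_period (hW : Function.Periodic W p) (hp : 0 < p)
    (htop : Tendsto (fun x : ℤ => (stack W 0 x).length) atTop atTop) :
    ∃ J m : ℤ, 0 ≤ J ∧ 0 < m ∧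
      ∀ x, J ≤ x → ((stack W 0 (x + p)).length : ℤ) = (stack W 0 x).length + m := by
  obtain ⟨J, hJ⟩ := eventually_atTop.1
    ((eventually_ge_atTop 0).and (htop.eventually_gt_atTop (stack W 0 p).length))
  have hstep : ∀ x, J ≤ x → (stack W 0 (x + 1 + p)).length + (stack W 0 x).length =
      (stack W 0 (x + 1)).length + (stack W 0 (x + p)).length := by
    intro x hx
    have hrestart : ∀ y, stack W p (y + p) = stack W 0 y := fun y => by
      rw [← stack_add_period hW 0 y, zero_add]
    obtain ⟨hx0, hhigh⟩ := hJ x hx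
    rw [← hrestart x] at hhigh
    have h := length_stack_succ_add hp.le (by omega) hhigh
    rwa [add_right_comm, hrestart, hrestart] at h
  obtain ⟨m, hm⟩ : ∃ m : ℤ, ((stack W 0 (J + p)).length : ℤ) = (stack W 0 J).length + m :=
    ⟨_, (add_sub_cancel _ _).symm⟩
  have hdrift : ∀ x, J ≤ x → ((stack W 0 (x + p)).length : ℤ) = (stack W 0 x).length + m := by
    intro x hx
    induction x, hx using Int.leInduction with
    | base => exact hm
    | succ x hx ih =>
      have := hstep x hx
      omega
  exact ⟨J, m, (hJ J le_rfl).1, pos_of_tendsto_of_add_period htop hp hdrift, hdrift⟩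

end Growth
/-! ### Arc diagrams on the integers -/

/-- `A` joins each point strictly between `a` and `b` to another such point. -/
def ClosedBetween (A : ℤ → ℤ → Prop) (a b : ℤ) : Prop :=
  ∀ x, a < x → x < b → ∃ y, a < y ∧ y < b ∧ (A x y ∨ A y x)

/-- Arc diagrams on `ℤ`: partial pairings without crossings, drawn as arcs above the line with no
unpaired point under an arc. `A a b` says that there is an arc with left end `a` and right end
`b`. -/
structure IsArcDiagram (A : ℤ → ℤ → Prop) : Prop where
  lt : ∀ {a b}, A a b → a < b
  left_unique : ∀ {a b c}, A a c → A b c → a = b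
  right_unique : ∀ {a b c}, A a b → A a c → b = c
  not_left_of_right : ∀ {a b c}, A a b → ¬ A b c
  closedBetween : ∀ {a b}, A a b → ClosedBetween A a b

/-- `x` is on no arc of `A`: the analogue of a through string. -/
def Unmatched (A : ℤ → ℤ → Prop) (x : ℤ) : Prop := ∀ y, ¬ A x y ∧ ¬ A y x

/-- `x` is not the right end of an arc of `A`: the analogue of an outward orientation. -/
def IsOutward (A : ℤ → ℤ → Prop) (x : ℤ) : Prop := ∀ y, ¬ A y x

section ArcDiagram

variable {A B : ℤ → ℤ → Prop} {a b c x y : ℤ}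

theorem Unmatched.isOutward (hx : Unmatched A x) : IsOutward A x := fun y => (hx y).2

theorem ClosedBetween.not_unmatched (h : ClosedBetween A a b) (hax : a < x) (hxb : x < b) :
    ¬ Unmatched A x := fun hx =>
  let ⟨y, _, _, hy⟩ := h x hax hxb
  hy.elim (hx y).1 (hx y).2

namespace IsArcDiagram

theorem isOutward_left (hA : IsArcDiagram A) (h : A a b) : IsOutward A a :=
  fun _ hy => hA.not_left_of_right hy h

theorem lt_left (hA : IsArcDiagram A) (h : ClosedBetween A a b) (hxy : A x y) (hay : a < y)
    (hyb : y < b) : a < x := by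
  obtain ⟨z, haz, -, hz | hz⟩ := h y hay hyb
  · exact absurd hz (hA.not_left_of_right hxy)
  · rwa [hA.left_unique hxy hz]

theorem not_unmatched (hA : IsArcDiagram A) (h : A a b) (hax : a ≤ x) (hxb : x ≤ b) :
    ¬ Unmatched A x := by
  intro hx
  rcases hax.eq_or_lt with rfl | hax
  · exact (hx b).1 h
  rcases hxb.eq_or_lt with rfl | hxb
  · exact (hx a).2 h
  exact (hA.closedBetween h).not_unmatched hax hxb hx

theorem closedBetween_of_unmatched (hA : IsArcDiagram A) (ha : Unmatched A a)
    (hb : Unmatched A b) (h : ∀ x, a < x → x < b → ¬ Unmatched A x) : ClosedBetween A a b := by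
  intro x hax hxb
  have hx := h x hax hxb
  simp only [Unmatched, not_forall, not_and_or, not_not] at hx
  obtain ⟨y, hy⟩ := hx
  refine ⟨y, ?_, ?_, hy⟩
  · by_contra! hya
    rcases hy with hy | hy
    · exact (hA.lt hy).not_ge (by omega)
    · exact hA.not_unmatched hy hya hax.le ha
  · by_contra! hby
    rcases hy with hy | hy
    · exact hA.not_unmatched hy hxb.le hby hb
    · exact (hA.lt hy).not_ge (by omega)

theorem closedBetween_of_arc_of_succ (hA : IsArcDiagram A) (h : ClosedBetween A a (b + 1))
    (hyb : A y b) : ClosedBetween A a y := by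
  have hlt := hA.lt hyb
  intro x hax hxy
  obtain ⟨z, haz, hzb, hz⟩ := h x hax (by omega)
  refine ⟨z, haz, ?_, hz⟩
  by_contra! hyz
  have hxz : A x z := hz.resolve_right fun h' => by
    have := hA.lt h'
    omega
  rcases hyz.eq_or_lt with rfl | hyz
  · exact hA.not_left_of_right hxz hyb
  rcases (Int.lt_add_one_iff.1 hzb).eq_or_lt with rfl | hzb
  · exact hxy.ne (hA.left_unique hxz hyb)
  · exact hxy.not_gt (hA.lt_left (hA.closedBetween hyb) hxz hyz hzb)

theorem eq_of_closedBetween {X : Type*} {f : ℤ → X} (hA : IsArcDiagram A) (hab : a < b)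
    (h : ClosedBetween A a b) (hf : ∀ x y, a < x → y < b → A x y → f (y + 1) = f x) :
    f b = f (a + 1) := by
  induction hn : (b - a).toNat using Nat.strong_induction_on generalizing b with
  | _ n ih =>
    rcases (Int.add_one_le_iff.2 hab).eq_or_lt with rfl | hab'
    · rfl
    obtain ⟨d, rfl⟩ : ∃ d, b = d + 1 := ⟨b - 1, by omega⟩
    obtain ⟨y, hay, hyd, hd | hd⟩ := h d (by omega) (by omega)
    · have := hA.lt hd
      omega
    have hlt := hA.lt hd
    rw [hf y d hay (by omega) hd]
    exact ih _ (by omega) hay (hA.closedBetween_of_arc_of_succ h hd)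
      (fun x z hax hzy => hf x z hax (by omega)) rfl

theorem exists_closedBetween_of_unmatched (hA : IsArcDiagram A) (hc : Unmatched A c)
    (hcx : c < x) : ∃ a, c ≤ a ∧ a < x ∧ IsOutward A a ∧ ClosedBetween A a x := by
  induction hn : (x - c).toNat using Nat.strong_induction_on generalizing x with
  | _ n ih =>
    obtain ⟨d, rfl⟩ : ∃ d, x = d + 1 := ⟨x - 1, by omega⟩
    by_cases hd : IsOutward A d
    · exact ⟨d, by omega, by omega, hd, fun y _ _ => by omega⟩
    simp only [IsOutward, not_forall, not_not] at hd
    obtain ⟨y, hy⟩ := hd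
    have hyd := hA.lt hy
    have hcy : c < y := not_le.1 fun hyc => hA.not_unmatched hy hyc (by omega) hc
    obtain ⟨a, hca, hay, ha, hclosed⟩ := ih _ (by omega) hcy rfl
    refine ⟨a, hca, by omega, ha, fun z haz hzd => ?_⟩
    rcases lt_trichotomy z y with hzy | rfl | hyz
    · obtain ⟨u, hau, huy, hu⟩ := hclosed z haz hzy
      exact ⟨u, hau, by omega, hu⟩
    · exact ⟨d, by omega, by omega, Or.inl hy⟩
    · rcases (Int.lt_add_one_iff.1 hzd).eq_or_lt with rfl | hzd
      · exact ⟨y, hay, by omega, Or.inr hy⟩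
      · obtain ⟨u, hyu, hud, hu⟩ := hA.closedBetween hy z hyz hzd
        exact ⟨u, by omega, by omega, hu⟩

theorem imp_of_isOutward_iff (hA : IsArcDiagram A) (hB : IsArcDiagram B)
    (h : ∀ x, IsOutward A x ↔ IsOutward B x) (hab : A a b) : B a b := by
  have hends : ∀ x, (∃ y, A y x) ↔ ∃ y, B y x := fun x => by
    simpa only [IsOutward, not_forall, not_not] using not_congr (h x)
  induction hn : (b - a).toNat using Nat.strong_induction_on generalizing a b with
  | _ n ih =>
    have hltA := hA.lt hab
    obtain ⟨a', ha'⟩ := (hends b).1 ⟨a, hab⟩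
    have hltB := hB.lt ha'
    rcases lt_trichotomy a a' with haa | rfl | haa
    · obtain ⟨y, -, hyb, hy | hy⟩ := hA.closedBetween hab a' haa hltB
      · have := hA.lt hy
        exact absurd (hB.right_unique (ih _ (by omega) hy rfl) ha') hyb.ne
      · exact absurd hy ((h a').2 (hB.isOutward_left ha') y)
    · exact ha'
    · obtain ⟨y, -, hyb, hy | hy⟩ := hB.closedBetween ha' a haa hltA
      · obtain ⟨z, hz⟩ := (hends y).2 ⟨a, hy⟩
        have haz := hA.lt_left (hA.closedBetween hab) hz (hB.lt hy) hyb
        have := hA.lt hz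
        exact absurd (hB.left_unique (ih _ (by omega) hz rfl) hy) haz.ne'
      · exact absurd hy ((h a).1 (hA.isOutward_left hab) y)

theorem ext_of_isOutward_iff (hA : IsArcDiagram A) (hB : IsArcDiagram B)
    (h : ∀ x, IsOutward A x ↔ IsOutward B x) : A = B := by
  ext a b
  exact ⟨hA.imp_of_isOutward_iff hB h, hB.imp_of_isOutward_iff hA fun x => (h x).symm⟩

end IsArcDiagram

end ArcDiagram

/-- Arc diagrams invariant under translation by `p`, with at least one unmatched point. -/
structure IsPeriodicArcDiagram (p : ℤ) (A : ℤ → ℤ → Prop) : Prop extends IsArcDiagram A where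
  add_period : ∀ a b, A (a + p) (b + p) ↔ A a b
  exists_unmatched : ∃ x, Unmatched A x

theorem exists_le_add_mul {p : ℤ} (hp : 0 < p) (J a : ℤ) : ∃ t : ℤ, J ≤ a + t * p :=
  ⟨|J - a|, by nlinarith [le_abs_self (J - a), abs_nonneg (J - a)]⟩

namespace IsPeriodicArcDiagram

variable {p : ℤ} {A : ℤ → ℤ → Prop} {a b x : ℤ}

theorem add_mul_period (hA : IsPeriodicArcDiagram p A) (t a b : ℤ) :
    A (a + t * p) (b + t * p) ↔ A a b := by
  have hper : Function.Periodic (fun k => A (a + k) (b + k)) p := fun k => by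
    simpa only [add_assoc] using propext (hA.add_period (a + k) (b + k))
  simpa using hper.int_mul_eq t

theorem isOutward_add_mul_period (hA : IsPeriodicArcDiagram p A) (t x : ℤ) :
    IsOutward A (x + t * p) ↔ IsOutward A x := by
  rw [IsOutward, ← (Equiv.addRight (t * p)).forall_congr_right]
  simp only [Equiv.coe_addRight, hA.add_mul_period, IsOutward]

theorem unmatched_add_mul_period (hA : IsPeriodicArcDiagram p A) (t x : ℤ) :
    Unmatched A (x + t * p) ↔ Unmatched A x := by
  rw [Unmatched, ← (Equiv.addRight (t * p)).forall_congr_right]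
  simp only [Equiv.coe_addRight, hA.add_mul_period, Unmatched]

theorem unmatched_add_period (hA : IsPeriodicArcDiagram p A) (x : ℤ) :
    Unmatched A (x + p) ↔ Unmatched A x := by
  simpa using hA.unmatched_add_mul_period 1 x

theorem closedBetween_add_mul_period (hA : IsPeriodicArcDiagram p A) (t : ℤ)
    (h : ClosedBetween A a b) : ClosedBetween A (a + t * p) (b + t * p) := by
  intro x hax hxb
  obtain ⟨y, hay, hyb, hy⟩ := h (x - t * p) (by omega) (by omega)
  refine ⟨y + t * p, by omega, by omega, ?_⟩
  rwa [← sub_add_cancel x (t * p), hA.add_mul_period, hA.add_mul_period]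

theorem exists_unmatched_mem_Ico (hA : IsPeriodicArcDiagram p A) (hp : 0 < p) (c : ℤ) :
    ∃ x, c ≤ x ∧ x < c + p ∧ Unmatched A x := by
  obtain ⟨x, hx⟩ := hA.exists_unmatched
  refine ⟨toIcoMod hp c x, left_le_toIcoMod hp c x, toIcoMod_lt_right hp c x, ?_⟩
  have := (hA.unmatched_add_mul_period (-toIcoDiv hp c x) x).2 hx
  rwa [neg_mul, ← sub_eq_add_neg, ← smul_eq_mul, ← toIcoMod] at this

theorem lt_add_period (hA : IsPeriodicArcDiagram p A) (hp : 0 < p) (h : A a b) : b < a + p := by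
  obtain ⟨x, hax, hxa, hx⟩ := hA.exists_unmatched_mem_Ico hp a
  by_contra! hab
  exact hA.not_unmatched h hax (by omega) hx

end IsPeriodicArcDiagram
/-! ### Admissible diagrams of a bi-infinite word -/

/-- The analogue on `ℤ` of `Admissible` for the bi-infinite word `W`: arcs join inverse letters,
and a letter is not the inverse of one that it covers. -/
structure IsAdmissibleDiagram {N : ℕ} (W : ℤ → Letter N) (A : ℤ → ℤ → Prop) : Prop where
  inv : ∀ {a b}, A a b → W a = linv (W b)
  ne : ∀ {a b}, a < b → IsOutward A a → IsOutward A b → ClosedBetween A a b → W a ≠ linv (W b)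

section Admissible

variable {N : ℕ} {W : ℤ → Letter N} {A : ℤ → ℤ → Prop} {a b c x : ℤ}

namespace IsArcDiagram

theorem mk_segment_eq_one_of_inner_arcs (hA : IsArcDiagram A) (hab : a < b)
    (h : ClosedBetween A a b)
    (hinner : ∀ x y, a < x → y < b → A x y → FreeGroup.mk (segment W x (y + 1)) = 1) :
    FreeGroup.mk (segment W (a + 1) b) = 1 := by
  have hconst := hA.eq_of_closedBetween (f := fun x => FreeGroup.mk (segment W (a + 1) x)) hab h
    fun x y hax hyb hxy => by
      have hlt := hA.lt hxy
      rw [← segment_append W (by omega : a + 1 ≤ x) (by omega : x ≤ y + 1), ← FreeGroup.mul_mk,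
        hinner x y hax hyb hxy, mul_one]
  simpa [FreeGroup.one_eq_mk] using hconst

theorem mk_segment_arc_eq_one (hA : IsArcDiagram A) (hinv : ∀ a b, A a b → W a = linv (W b))
    (hab : A a b) : FreeGroup.mk (segment W a (b + 1)) = 1 := by
  induction hn : (b - a).toNat using Nat.strong_induction_on generalizing a b with
  | _ n ih =>
    have hlt := hA.lt hab
    have hinside := hA.mk_segment_eq_one_of_inner_arcs hlt (hA.closedBetween hab)
      fun x y hax hyb hxy => by
        have hxy' := hA.lt hxy
        exact ih _ (by omega) hxy rfl
    rw [segment_succ_right W hlt.le, ← segment_append W (by omega : a ≤ a + 1) hlt,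
      segment_succ_right W le_rfl, ← FreeGroup.mul_mk, ← FreeGroup.mul_mk, hinside,
      segment_self, List.nil_append, mul_one, hinv a b hab, mk_linv, inv_mul_cancel]

theorem mk_segment_closedBetween_eq_one (hA : IsArcDiagram A)
    (hinv : ∀ a b, A a b → W a = linv (W b)) (hab : a < b) (h : ClosedBetween A a b) :
    FreeGroup.mk (segment W (a + 1) b) = 1 :=
  hA.mk_segment_eq_one_of_inner_arcs hab h fun _ _ _ _ => hA.mk_segment_arc_eq_one hinv

end IsArcDiagram

open Filter

namespace IsAdmissibleDiagram

theorem stack_succ_eq_cons_of_isOutward (hA : IsArcDiagram A) (hW : IsAdmissibleDiagram W A)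
    (hc : Unmatched A c) (hcx : c ≤ x) (hx : IsOutward A x) :
    stack W c (x + 1) = W x :: stack W c x := by
  induction hn : (x - c).toNat using Nat.strong_induction_on generalizing x with
  | _ n ih =>
    rw [stack_succ W hcx]
    rcases hcx.eq_or_lt with rfl | hcx
    · simp [stack]
    obtain ⟨a, hca, hax, ha, hclosed⟩ := hA.exists_closedBetween_of_unmatched hc hcx
    have hmk := hA.mk_segment_closedBetween_eq_one (fun _ _ => hW.inv) hax hclosed
    rw [stack_eq_of_mk_segment_eq_one (by omega) hax hmk, ih _ (by omega) hca ha rfl]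
    exact push_cons_of_ne (hW.ne hax ha hx hclosed) _

theorem length_stack_succ_iff (hA : IsArcDiagram A) (hW : IsAdmissibleDiagram W A)
    (hc : Unmatched A c) (hcx : c ≤ x) :
    (stack W c (x + 1)).length = (stack W c x).length + 1 ↔ IsOutward A x := by
  refine ⟨fun h a hax => ?_, fun hx => by simp [hW.stack_succ_eq_cons_of_isOutward hA hc hcx hx]⟩
  have hlt := hA.lt hax
  have hca : c < a := not_le.1 fun hac => hA.not_unmatched hax hac hcx hc
  have hmk := hA.mk_segment_closedBetween_eq_one (fun _ _ => hW.inv) hlt (hA.closedBetween hax)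
  have hpush := congrArg List.length
    (hW.stack_succ_eq_cons_of_isOutward hA hc hca.le (hA.isOutward_left hax))
  rw [stack_eq_of_mk_segment_eq_one hca.le (by omega)
      (hA.mk_segment_arc_eq_one (fun _ _ => hW.inv) hax),
    stack_eq_of_mk_segment_eq_one (by omega) hlt hmk, hpush, List.length_cons] at h
  omega

variable {p : ℤ}

theorem eventually_isOutward_iff (hA : IsPeriodicArcDiagram p A) (hW : IsAdmissibleDiagram W A)
    (hp : 0 < p) (htop : Tendsto (fun x : ℤ => (stack W 0 x).length) atTop atTop) :
    ∀ᶠ x in atTop,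
      IsOutward A x ↔ (stack W 0 (x + 1)).length = (stack W 0 x).length + 1 := by
  obtain ⟨c, hc0, -, hc⟩ := hA.exists_unmatched_mem_Ico hp 0
  filter_upwards [eventually_ge_atTop c,
    htop.eventually_gt_atTop (2 * (stack W 0 c).length)] with x hcx hhigh
  have hle : (stack W 0 x).length ≤ (stack W c x).length + (stack W 0 c).length := by
    rw [stack_eq_pushAll_stack W hc0 hcx]
    exact length_pushAll_le _ _
  have hadd := length_stack_succ_add hc0 hcx (by omega : (stack W 0 c).length < _)
  rw [← hW.length_stack_succ_iff hA.toIsArcDiagram hc hcx]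
  omega

theorem eq_of_tendsto {B : ℤ → ℤ → Prop} (hA : IsPeriodicArcDiagram p A)
    (hB : IsPeriodicArcDiagram p B) (hWA : IsAdmissibleDiagram W A)
    (hWB : IsAdmissibleDiagram W B) (hp : 0 < p)
    (htop : Tendsto (fun x : ℤ => (stack W 0 x).length) atTop atTop) : A = B := by
  obtain ⟨J, hJ⟩ := eventually_atTop.1
    ((hWA.eventually_isOutward_iff hA hp htop).and (hWB.eventually_isOutward_iff hB hp htop))
  refine hA.ext_of_isOutward_iff hB.toIsArcDiagram fun x => ?_
  obtain ⟨t, ht⟩ := exists_le_add_mul hp J x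
  rw [← hA.isOutward_add_mul_period t, ← hB.isOutward_add_mul_period t, (hJ _ ht).1, (hJ _ ht).2]

end IsAdmissibleDiagram

end Admissible
/-! ### Lattice paths with drift -/

/-- A path on `ℤ` with steps `±1` which gains the height `m` over each period `p`. -/
structure IsDriftingPath (p m : ℤ) (H : ℤ → ℤ) : Prop where
  step : ∀ x, H (x + 1) = H x + 1 ∨ H (x + 1) = H x - 1
  drift : ∀ x, H (x + p) = H x + m

/-- The arcs of the lattice path `H`: the up-step at `a` is joined to the down-step at `b` by which
the path first returns to the height `H a`. -/
def PathArc (H : ℤ → ℤ) (a b : ℤ) : Prop :=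
  a < b ∧ H (b + 1) = H a ∧ ∀ x, a < x → x ≤ b → H a < H x

section LatticePath

variable {H : ℤ → ℤ} {p m a b x y : ℤ}

theorem periodic_mul_sub_mul_of_drift (hH : ∀ x, H (x + p) = H x + m) :
    Function.Periodic (fun x => p * H x - m * x) p := fun x => by
  simp only [hH]
  ring

theorem map_add_mul_of_drift (hp : 0 < p) (hH : ∀ x, H (x + p) = H x + m) (t x : ℤ) :
    H (x + t * p) = H x + t * m := by
  have h : p * H (x + t * p) - m * (x + t * p) = p * H x - m * x :=
    (periodic_mul_sub_mul_of_drift hH).int_mul t x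
  exact mul_left_cancel₀ hp.ne' (by linear_combination h)

theorem exists_pathArc_of_up (hstep : ∀ x, H (x + 1) = H x + 1 ∨ H (x + 1) = H x - 1)
    (hup : H (x + 1) = H x + 1) (hxy : x < y) (hy : H y ≤ H x) : ∃ b, b < y ∧ PathArc H x b := by
  obtain ⟨e, ⟨hxe, he⟩, hleast⟩ := Int.exists_least_of_bdd (P := fun e => x < e ∧ H e ≤ H x)
    ⟨x, fun _ h => h.1.le⟩ ⟨y, hxy, hy⟩
  obtain ⟨b, rfl⟩ : ∃ b, e = b + 1 := ⟨e - 1, by omega⟩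
  have habove : ∀ z, x < z → z ≤ b → H x < H z := fun z hxz hzb => by
    by_contra! hz
    have := hleast z ⟨hxz, hz⟩
    omega
  have hxb : x < b := (Int.lt_add_one_iff.1 hxe).lt_of_ne (by rintro rfl; omega)
  have hb := habove b hxb le_rfl
  have hlast := hstep b
  have hby := hleast y ⟨hxy, hy⟩
  exact ⟨b, by omega, hxb, by omega, habove⟩

theorem exists_pathArc_of_down (hstep : ∀ x, H (x + 1) = H x + 1 ∨ H (x + 1) = H x - 1)
    (hdown : H (x + 1) = H x - 1) (hyx : y ≤ x) (hy : H y ≤ H (x + 1)) :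
    ∃ a, y ≤ a ∧ PathArc H a x := by
  obtain ⟨a, ⟨hax, ha⟩, hgreatest⟩ :=
    Int.exists_greatest_of_bdd (P := fun e => e ≤ x ∧ H e ≤ H (x + 1))
      ⟨x, fun _ h => h.1⟩ ⟨y, hyx, hy⟩
  have habove : ∀ z, a < z → z ≤ x → H (x + 1) < H z := fun z haz hzx => by
    by_contra! hz
    have := hgreatest z ⟨hzx, hz⟩
    omega
  have hax' : a < x := hax.lt_of_ne (by rintro rfl; omega)
  have hfirst := hstep a
  have hnext := habove (a + 1) (by omega) hax'
  have heq : H (x + 1) = H a := by omega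
  exact ⟨a, hgreatest y ⟨hyx, hy⟩, hax', heq, heq ▸ habove⟩

namespace PathArc

theorem up (hstep : ∀ x, H (x + 1) = H x + 1 ∨ H (x + 1) = H x - 1) (h : PathArc H a b) :
    H (a + 1) = H a + 1 := by
  have hhigh := h.2.2 (a + 1) (by omega) h.1
  have := hstep a
  omega

theorem down (hstep : ∀ x, H (x + 1) = H x + 1 ∨ H (x + 1) = H x - 1) (h : PathArc H a b) :
    H (b + 1) = H b - 1 := by
  have hhigh := h.2.2 b h.1 le_rfl
  have hreturn := h.2.1
  have := hstep b
  omega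

end PathArc

theorem isArcDiagram_pathArc (hstep : ∀ x, H (x + 1) = H x + 1 ∨ H (x + 1) = H x - 1) :
    IsArcDiagram (PathArc H) where
  lt h := h.1
  left_unique := by
    intro a b c ha hb
    rcases lt_trichotomy a b with hab | rfl | hab
    · exact absurd (ha.2.1.symm.trans hb.2.1) (ha.2.2 b hab hb.1.le).ne
    · rfl
    · exact absurd (hb.2.1.symm.trans ha.2.1) (hb.2.2 a hab ha.1.le).ne
  right_unique := by
    intro a b c hb hc
    rcases lt_trichotomy b c with hbc | rfl | hbc
    · exact absurd hb.2.1 (hc.2.2 (b + 1) (by have := hb.1; omega) hbc).ne'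
    · rfl
    · exact absurd hc.2.1 (hb.2.2 (c + 1) (by have := hc.1; omega) hbc).ne'
  not_left_of_right hab hbc := by
    have hdown := hab.down hstep
    have hup := hbc.up hstep
    omega
  closedBetween := by
    intro a b h x hax hxb
    have hx := h.2.2 x hax hxb.le
    rcases hstep x with hup | hdown
    · have hb := h.down hstep
      obtain ⟨y, hyb, hy⟩ := exists_pathArc_of_up hstep hup hxb (by have := h.2.1; omega)
      exact ⟨y, by have := hy.1; omega, hyb, Or.inl hy⟩
    · have ha := h.up hstep
      have hnext := h.2.2 (x + 1) (by omega) hxb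
      obtain ⟨y, hay, hy⟩ := exists_pathArc_of_down hstep hdown hax (by omega)
      exact ⟨y, by omega, by have := hy.1; omega, Or.inr hy⟩

namespace IsDriftingPath

theorem isOutward_pathArc_iff (hH : IsDriftingPath p m H) (hp : 0 < p) (hm : 0 < m) :
    IsOutward (PathArc H) x ↔ H (x + 1) = H x + 1 := by
  refine ⟨fun h => (hH.step x).resolve_right fun hdown => ?_, fun hup a ha => ?_⟩
  · have hlow := hH.drift (x - p)
    rw [sub_add_cancel] at hlow
    obtain ⟨a, -, ha⟩ := exists_pathArc_of_down hH.step hdown (y := x - p) (by omega) (by omega)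
    exact h a ha
  · have := ha.down hH.step
    omega

theorem exists_forall_lt (hH : IsDriftingPath p m H) (hp : 0 < p) (hm : 0 < m) :
    ∃ x, ∀ y, x < y → H x < H y := by
  -- Any minimum of the periodic function `p * H x - m * x` has this property.
  obtain ⟨x, -, hx⟩ := (Finset.Ico 0 p).exists_min_image (fun x => p * H x - m * x)
    ⟨0, Finset.mem_Ico.2 ⟨le_rfl, hp⟩⟩
  refine ⟨x, fun y hxy => ?_⟩
  obtain ⟨z, hz, hyz⟩ := (periodic_mul_sub_mul_of_drift hH.drift).exists_mem_Ico₀ hp y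
  have hmin := hx z (Finset.mem_Ico.2 hz)
  simp only [← hyz] at hmin
  nlinarith

theorem isPeriodicArcDiagram_pathArc (hH : IsDriftingPath p m H) (hp : 0 < p) (hm : 0 < m) :
    IsPeriodicArcDiagram p (PathArc H) where
  toIsArcDiagram := isArcDiagram_pathArc hH.step
  add_period a b := by
    have hreturn : H (b + p + 1) = H (a + p) ↔ H (b + 1) = H a := by
      rw [add_right_comm, hH.drift, hH.drift, add_left_inj]
    refine and_congr (by omega) (and_congr hreturn ⟨fun h x hax hxb => ?_, fun h x hax hxb => ?_⟩)
    · have := h (x + p) (by omega) (by omega)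
      rw [hH.drift, hH.drift] at this
      omega
    · have := h (x - p) (by omega) (by omega)
      have := hH.drift (x - p)
      rw [sub_add_cancel] at this
      rw [hH.drift]
      omega
  exists_unmatched := by
    obtain ⟨x, hx⟩ := hH.exists_forall_lt hp hm
    refine ⟨x, fun y => ⟨fun h => ?_, fun h => ?_⟩⟩
    · exact (hx (y + 1) (by have := h.1; omega)).ne' h.2.1
    · have := hx (x + 1) (by omega)
      have := h.down hH.step
      omega

end IsDriftingPath

theorem exists_drifting_extension {f : ℤ → ℤ} {J : ℤ} (hp : 0 < p)
    (hf : ∀ x, J ≤ x → f (x + p) = f x + m) :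
    ∃ H : ℤ → ℤ, (∀ x, H (x + p) = H x + m) ∧ ∀ x, J ≤ x → H x = f x := by
  have hmul : ∀ (t : ℕ) (x : ℤ), J ≤ x → f (x + t * p) = f x + t * m := by
    intro t x hx
    induction t with
    | zero => simp
    | succ t ih =>
      have := hf (x + t * p) (by nlinarith)
      rw [show x + ((t + 1 : ℕ) : ℤ) * p = x + t * p + p by push_cast; ring, this, ih]
      push_cast
      ring
  refine ⟨fun x => f (J + (x - J) % p) + (x - J) / p * m, fun x => ?_, fun x hx => ?_⟩
  · have hmod : (x + p - J) % p = (x - J) % p := by rw [add_sub_right_comm, Int.add_emod_right]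
    have hdiv : (x + p - J) / p = (x - J) / p + 1 := by
      rw [add_sub_right_comm, Int.add_ediv_of_dvd_right dvd_rfl, Int.ediv_self hp.ne']
    simp only [hmod, hdiv]
    ring
  · have hnonneg := Int.ediv_nonneg (sub_nonneg.2 hx) hp.le
    have h := hmul ((x - J) / p).toNat (J + (x - J) % p)
      (by have := Int.emod_nonneg (x - J) hp.ne'; omega)
    rw [Int.toNat_of_nonneg hnonneg] at h
    dsimp only
    rw [← h, add_assoc, mul_comm, Int.emod_add_mul_ediv, add_sub_cancel]

end LatticePath

/-! ### The admissible diagram of a periodic word -/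

section Core

variable {N : ℕ} {W : ℤ → Letter N} {H : ℤ → ℤ} {p m J a b : ℤ}

/-- Between the two ends of an arc the height stays above that of its left end, so the stack at
the left end survives and only the letter put on top of it is cancelled. -/
theorem linv_of_pathArc_stack (hJ : 0 ≤ J) (hstack : ∀ x, J ≤ x → H x = (stack W 0 x).length)
    (hJa : J ≤ a) (h : PathArc H a b) : W a = linv (W b) := by
  obtain ⟨hab, hreturn, habove⟩ := h
  have hup := length_stack_succ W (by omega : 0 ≤ a)
  have hdown := length_stack_succ W (by omega : 0 ≤ b)
  have hfirst := habove (a + 1) (by omega) hab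
  have hlast := habove b hab le_rfl
  rw [hstack _ hJa, hstack _ (by omega)] at hreturn hfirst hlast
  have hsame : stack W 0 b = stack W 0 (a + 1) := by
    refine stack_eq_of_length_eq (by omega) hab (fun x hax hxb => ?_) (by omega)
    have hx := habove x (by omega) hxb
    rw [hstack a hJa, hstack x (by omega)] at hx
    omega
  have htop := stack_eq_linv_cons (by omega) (by omega : (stack W 0 (b + 1)).length + 1 = _)
  rw [hsame, stack_succ_eq_cons (by omega) (by omega : _ = (stack W 0 a).length + 1)] at htop
  exact List.head_eq_of_cons_eq htop

theorem isAdmissibleDiagram_pathArc (hW : Function.Periodic W p) (hp : 0 < p) (hm : 0 < m)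
    (hH : IsDriftingPath p m H) (hJ : 0 ≤ J)
    (hstack : ∀ x, J ≤ x → H x = (stack W 0 x).length) : IsAdmissibleDiagram W (PathArc H) := by
  have hA := hH.isPeriodicArcDiagram_pathArc hp hm
  have hWmul : ∀ t x : ℤ, W (x + t * p) = W x := fun t x => hW.int_mul t x
  have hinv : ∀ a b, PathArc H a b → W a = linv (W b) := fun a b hab => by
    obtain ⟨t, ht⟩ := exists_le_add_mul hp J a
    rw [← hWmul t a, ← hWmul t b]
    exact linv_of_pathArc_stack hJ hstack ht ((hA.add_mul_period t a b).2 hab)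
  refine ⟨hinv _ _, fun {a b} hab ha hb hclosed => ?_⟩
  obtain ⟨t, ht⟩ := exists_le_add_mul hp J a
  rw [← hWmul t a, ← hWmul t b]
  rw [← hA.isOutward_add_mul_period t, hH.isOutward_pathArc_iff hp hm, hstack _ (by omega),
    hstack _ (by omega)] at ha hb
  have hmk := hA.mk_segment_closedBetween_eq_one hinv (by omega)
    (hA.closedBetween_add_mul_period t hclosed)
  have hreduced := linReduced_pushAll (segment W 0 (b + t * p + 1))
  rw [← stack, stack_succ_eq_cons (by omega) (by exact_mod_cast hb),
    stack_eq_of_mk_segment_eq_one (by omega) (by omega) hmk,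
    stack_succ_eq_cons (by omega) (by exact_mod_cast ha)] at hreduced
  exact (List.isChain_cons_cons.1 hreduced).1

open Filter

theorem exists_admissibleDiagram (hW : Function.Periodic W p) (hp : 0 < p)
    (htop : Tendsto (fun x : ℤ => (stack W 0 x).length) atTop atTop) :
    ∃ A, IsPeriodicArcDiagram p A ∧ IsAdmissibleDiagram W A := by
  obtain ⟨J, m, hJ, hm, hdrift⟩ := exists_length_stack_add_period hW hp htop
  obtain ⟨H, hHdrift, hstack⟩ :=
    exists_drifting_extension (f := fun x => ((stack W 0 x).length : ℤ)) hp hdrift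
  have hH : IsDriftingPath p m H := by
    refine ⟨fun x => ?_, hHdrift⟩
    obtain ⟨t, ht⟩ := exists_le_add_mul hp J x
    have hx := map_add_mul_of_drift hp hHdrift t x
    have hx' := map_add_mul_of_drift hp hHdrift t (x + 1)
    have hlen := length_stack_succ W (hJ.trans ht)
    rw [hstack _ ht] at hx
    rw [add_right_comm, hstack _ (by omega)] at hx'
    omega
  exact ⟨_, hH.isPeriodicArcDiagram_pathArc hp hm,
    isAdmissibleDiagram_pathArc hW hp hm hH hJ hstack⟩

theorem existsUnique_admissibleDiagram (hW : Function.Periodic W p) (hp : 0 < p)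
    (hgrow : Tendsto (fun k : ℕ => ((FreeGroup.mk (segment W 0 p)) ^ k).norm) atTop atTop) :
    ∃! A, IsPeriodicArcDiagram p A ∧ IsAdmissibleDiagram W A := by
  have htop := tendsto_length_stack hW hp hgrow
  obtain ⟨A, hA, hWA⟩ := exists_admissibleDiagram hW hp htop
  exact ⟨A, ⟨hA, hWA⟩, fun B ⟨hB, hWB⟩ => hWB.eq_of_tendsto hB hA hWA hp htop⟩

end Core

/-! ### Residues of integer positions -/

/-- The position in `[n]` congruent to the integer `k`: the points of `ℤ` are the lifts of the
cyclically ordered points of `[n]`. -/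
def residue (n : ℕ) [NeZero n] (k : ℤ) : Fin n :=
  ⟨(k % n).toNat, by
    have hn : (0 : ℤ) < n := by exact_mod_cast Nat.pos_of_neZero n
    have := Int.emod_lt_of_pos k hn
    omega⟩

section Residue

variable {n : ℕ} [NeZero n] {a b c d k l : ℤ}

theorem coe_residue (k : ℤ) : ((residue n k : ℕ) : ℤ) = k % n :=
  Int.toNat_of_nonneg (Int.emod_nonneg k (by exact_mod_cast NeZero.ne n))

theorem residue_coe (i : Fin n) : residue n ((i : ℕ) : ℤ) = i := by
  have h := coe_residue (n := n) (i : ℕ)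
  rw [Int.emod_eq_of_lt (by omega) (by omega)] at h
  exact Fin.ext (by exact_mod_cast h)

theorem residue_eq_iff : residue n k = residue n l ↔ ∃ t : ℤ, l = k + t * n := by
  rw [Fin.ext_iff, ← Int.natCast_inj, coe_residue, coe_residue, ← Int.ModEq, Int.modEq_iff_dvd]
  exact exists_congr fun t => by rw [sub_eq_iff_eq_add', mul_comm]

@[simp]
theorem residue_add_mul (k t : ℤ) : residue n (k + t * n) = residue n k :=
  (residue_eq_iff.2 ⟨t, rfl⟩).symm

@[simp]
theorem residue_add_self (k : ℤ) : residue n (k + n) = residue n k := by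
  simpa using residue_add_mul (n := n) k 1

theorem eq_of_residue_eq (h : residue n k = residue n l) (hkl : k < l + n) (hlk : l < k + n) :
    k = l := by
  have hmod : k % n = l % n := by rw [← coe_residue, ← coe_residue, h]
  have := Int.eq_zero_of_abs_lt_dvd (Int.ModEq.dvd hmod.symm) (abs_lt.2 ⟨by omega, by omega⟩)
  omega

theorem exists_residue_eq (c : ℤ) (i : Fin n) : ∃ k, c ≤ k ∧ k < c + n ∧ residue n k = i := by
  have hn : (0 : ℤ) < n := by exact_mod_cast Nat.pos_of_neZero n
  refine ⟨toIcoMod hn c (i : ℕ), left_le_toIcoMod hn c _, toIcoMod_lt_right hn c _, ?_⟩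
  conv_rhs => rw [← residue_coe i, ← toIcoMod_add_toIcoDiv_zsmul hn c (i : ℕ)]
  rw [smul_eq_mul, residue_add_mul]

theorem cnext_residue (k : ℤ) : cnext (residue n k) = residue n (k + 1) := by
  refine Fin.ext (Int.natCast_inj.1 ?_)
  rw [coe_residue, cnext, Int.natCast_mod, Nat.cast_add, coe_residue]
  simp

theorem cprev_residue (k : ℤ) : cprev (residue n k) = residue n (k - 1) := by
  have hn := Nat.pos_of_neZero n
  refine Fin.ext (Int.natCast_inj.1 ?_)
  rw [coe_residue, cprev, Int.natCast_mod, Nat.cast_sub (by omega), Nat.cast_add, coe_residue,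
    add_sub_right_comm]
  simp

theorem coe_residue_sub_residue (hkl : k ≤ l) (hlk : l < k + n) :
    ((((residue n l : ℕ) + n - (residue n k : ℕ)) % n : ℕ) : ℤ) = l - k := by
  have hk := (residue n k).isLt
  rw [Int.natCast_mod, Nat.cast_sub (by omega), Nat.cast_add, coe_residue, coe_residue,
    add_sub_right_comm, Int.add_emod_right, ← Int.sub_emod,
    Int.emod_eq_of_lt (by omega) (by omega)]

theorem inCyc_residue_iff (hab : a ≤ b) (hba : b < a + n) (hk : a ≤ k) (hka : k < a + n) :
    InCyc (residue n a) (residue n b) (residue n k) ↔ k ≤ b := by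
  rw [InCyc, ← Int.ofNat_le, coe_residue_sub_residue hk hka, coe_residue_sub_residue hab hba]
  omega

theorem residue_lt_residue (hk : 0 ≤ k) (hkl : k < l) (hl : l < n) :
    residue n k < residue n l := by
  rw [Fin.lt_def, ← Int.ofNat_lt, coe_residue, coe_residue, Int.emod_eq_of_lt hk (by omega),
    Int.emod_eq_of_lt (by omega) hl]
  exact hkl

theorem NonCrossingRel.of_residue {r : Fin n → Fin n → Prop} (hr : NonCrossingRel r)
    (he : Equivalence r) (hab : a < b) (hbc : b < c) (hcd : c < d) (hda : d < a + n)
    (hac : r (residue n a) (residue n c)) (hbd : r (residue n b) (residue n d)) :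
    r (residue n a) (residue n b) := by
  have hn : (0 : ℤ) < n := by exact_mod_cast Nat.pos_of_neZero n
  have hwindow : ∀ {a b c d : ℤ}, 0 ≤ a → a < b → b < c → c < d → d < n →
      r (residue n a) (residue n c) → r (residue n b) (residue n d) →
      r (residue n a) (residue n b) := fun ha hab hbc hcd hd =>
    hr _ _ _ _ (residue_lt_residue ha hab (by omega))
      (residue_lt_residue (by omega) hbc (by omega)) (residue_lt_residue (by omega) hcd hd)
  obtain ⟨q, hq, hq0, hqn⟩ : ∃ q, (∀ k, residue n (k - q) = residue n k) ∧ 0 ≤ a - q ∧ a - q < n :=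
    ⟨a / n * n, fun k => by rw [← residue_add_mul (k - _) (a / n), sub_add_cancel],
      by linarith [Int.ediv_mul_le a hn.ne'], by linarith [Int.lt_ediv_add_one_mul_self a hn]⟩
  have hq' : ∀ k, residue n (k - q - n) = residue n k := fun k => by
    rw [← residue_add_self (k - q - n), sub_add_cancel, hq]
  rcases lt_or_ge (d - q) n with hd | hd
  · have := @hwindow (a - q) (b - q) (c - q) (d - q)
    simp only [hq] at this
    exact this hq0 (by omega) (by omega) (by omega) hd hac hbd
  rcases lt_or_ge (c - q) n with hc | hc
  · have := @hwindow (d - q - n) (a - q) (b - q) (c - q)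
    simp only [hq, hq'] at this
    have hda := this (by omega) (by omega) (by omega) (by omega) hc (he.symm hbd) hac
    exact he.symm (he.trans hbd hda)
  rcases lt_or_ge (b - q) n with hb | hb
  · have := @hwindow (c - q - n) (d - q - n) (a - q) (b - q)
    simp only [hq, hq'] at this
    have hcd := this (by omega) (by omega) (by omega) (by omega) hb (he.symm hac) (he.symm hbd)
    exact he.trans hac (he.trans hcd (he.symm hbd))
  · have := @hwindow (b - q - n) (c - q - n) (d - q - n) (a - q)
    simp only [hq, hq'] at this
    have hbc := this (by omega) (by omega) (by omega) (by omega) hqn hbd (he.symm hac)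
    exact he.trans hac (he.symm hbc)

end Residue

/-! ### Half-pairings as arc diagrams -/

section Partition

variable {n : ℕ} {P Q : Finpartition (Finset.univ : Finset (Fin n))} {i j k : Fin n}

theorem rel_iff_part_eq : Rel P i j ↔ P.part i = P.part j := by
  rw [← P.mem_part_iff_part_eq_part (Finset.mem_univ i) (Finset.mem_univ j),
    P.mem_part_iff_exists, Rel]

theorem equivalence_rel (P : Finpartition (Finset.univ : Finset (Fin n))) :
    Equivalence (Rel P) := by
  have hrel : Rel P = fun i j => P.part i = P.part j := by
    ext i j
    exact rel_iff_part_eq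
  rw [hrel]
  exact ⟨fun _ => rfl, Eq.symm, Eq.trans⟩

theorem isSingleton_iff : IsSingleton P i ↔ ∀ j, Rel P i j → j = i := by
  constructor
  · rintro ⟨B, hB, hi, hcard⟩ j ⟨C, hC, hiC, hjC⟩
    rw [P.eq_of_mem_parts hC hB hiC hi] at hjC
    exact Finset.card_le_one.1 hcard.le j hjC i hi
  · intro h
    obtain ⟨B, hB, hi⟩ := P.exists_mem (Finset.mem_univ i)
    exact ⟨B, hB, hi, Finset.card_eq_one.2
      ⟨i, Finset.eq_singleton_iff_unique_mem.2 ⟨hi, fun j hj => h j ⟨B, hB, hi, hj⟩⟩⟩⟩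

theorem RelTilde.isSingleton (h : RelTilde P i j) (hi : IsSingleton P i) : IsSingleton P j :=
  h.elim (fun hij => isSingleton_iff.1 hi j hij ▸ hi) And.right

theorem equivalence_relTilde (P : Finpartition (Finset.univ : Finset (Fin n))) :
    Equivalence (RelTilde P) := by
  have hsymm : ∀ {i j}, RelTilde P i j → RelTilde P j i :=
    fun h => h.imp (equivalence_rel P).symm And.symm
  refine ⟨fun i => Or.inl ((equivalence_rel P).refl i), hsymm, fun {i j k} hij hjk => ?_⟩
  by_cases hj : IsSingleton P j
  · exact Or.inr ⟨(hsymm hij).isSingleton hj, hjk.isSingleton hj⟩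
  · exact Or.inl ((equivalence_rel P).trans (hij.resolve_right fun h => hj h.2)
      (hjk.resolve_right fun h => hj h.1))

theorem finpartition_eq_of_rel_iff (h : ∀ i j, Rel P i j ↔ Rel Q i j) : P = Q := by
  have hle : ∀ {P Q : Finpartition (Finset.univ : Finset (Fin n))},
      (∀ i j, Rel P i j → Rel Q i j) → P ≤ Q := by
    intro P Q h B hB
    obtain ⟨i, hi⟩ := P.nonempty_of_mem_parts hB
    refine ⟨Q.part i, Q.part_mem.2 (Finset.mem_univ i), fun j hj => ?_⟩
    rw [← rel_iff_part_eq.1 (h j i ⟨B, hB, hj, hi⟩)]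
    exact Q.mem_part_self.2 (Finset.mem_univ j)
  exact le_antisymm (hle fun i j => (h i j).1) (hle fun i j => (h i j).2)

end Partition

section HalfPairing

variable {n : ℕ} {π ρ : HalfPairing n} {i j k : Fin n}

theorem Pairs.symm (h : Pairs π i j) : Pairs π j i := ⟨h.1.symm, (equivalence_rel π.P).symm h.2⟩

theorem Pairs.right_unique (hij : Pairs π i j) (hik : Pairs π i k) : j = k := by
  obtain ⟨hne, B, hB, hi, hj⟩ := hij
  obtain ⟨hne', C, hC, hiC, hk⟩ := hik
  rw [π.P.eq_of_mem_parts hC hB hiC hi] at hk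
  by_contra hjk
  exact (π.card_le B hB).not_gt
    (Finset.two_lt_card.2 ⟨i, hi, j, hj, k, hk, hne, hne', hjk⟩)

theorem not_isSingleton_iff_exists_pairs : ¬ IsSingleton π.P i ↔ ∃ j, Pairs π i j := by
  rw [isSingleton_iff]
  push Not
  exact exists_congr fun j => by rw [Pairs, and_comm, ne_comm]

theorem Pairs.not_isSingleton (h : Pairs π i j) : ¬ IsSingleton π.P i :=
  not_isSingleton_iff_exists_pairs.2 ⟨j, h⟩

theorem halfPairing_eq_of_pairs_iff (h : ∀ i j, Pairs π i j ↔ Pairs ρ i j) : π = ρ := by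
  have hP : π.P = ρ.P := finpartition_eq_of_rel_iff fun i j => by
    by_cases hij : i = j
    · simp only [hij, (equivalence_rel _).refl]
    · simpa [Pairs, hij] using h i j
  cases π
  cases ρ
  cases hP
  rfl

end HalfPairing

/-- The lift of a half-pairing to `ℤ`: each lift of a pair is an arc if no through string lies
between its points. Of the two ways to join a pair on the circle this selects the one
avoiding the through strings, so the left end is the one oriented outward. -/
def HalfPairing.arc {n : ℕ} [NeZero n] (π : HalfPairing n) (a b : ℤ) : Prop :=
  a < b ∧ b < a + n ∧ Pairs π (residue n a) (residue n b) ∧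
    ∀ x, a ≤ x → x ≤ b → ¬ IsSingleton π.P (residue n x)

namespace HalfPairing

variable {n : ℕ} [NeZero n] {π ρ : HalfPairing n} {a b c d x : ℤ}

theorem arc.pairs (h : π.arc a b) : Pairs π (residue n a) (residue n b) := h.2.2.1

theorem exists_isSingleton_mem_Ico (π : HalfPairing n) (c : ℤ) :
    ∃ x, c ≤ x ∧ x < c + n ∧ IsSingleton π.P (residue n x) := by
  obtain ⟨i, hi⟩ := π.exists_singleton
  obtain ⟨x, hcx, hxc, rfl⟩ := exists_residue_eq c i
  exact ⟨x, hcx, hxc, hi⟩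

theorem lt_of_forall_not_isSingleton
    (h : ∀ x, a ≤ x → x ≤ b → ¬ IsSingleton π.P (residue n x)) : b + 1 < a + n := by
  obtain ⟨x, hax, hxa, hx⟩ := π.exists_isSingleton_mem_Ico a
  by_contra! hb
  exact h x hax (by omega) hx

theorem not_pairs_of_crossing (hab : a < b) (hbc : b < c) (hcd : c < d) (hda : d < a + n)
    (hac : Pairs π (residue n a) (residue n c)) : ¬ Pairs π (residue n b) (residue n d) := by
  intro hbd
  have hrel := π.nc.of_residue (equivalence_rel π.P) hab hbc hcd hda hac.2 hbd.2
  have hne : residue n a ≠ residue n b := fun h => hab.ne (eq_of_residue_eq h (by omega) (by omega))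
  exact hbc.ne' (eq_of_residue_eq (hac.right_unique ⟨hne, hrel⟩) (by omega) (by omega))

theorem arc_or_arc_of_pairs (hab : a < b) (hba : b < a + n)
    (h : Pairs π (residue n a) (residue n b)) : π.arc a b ∨ π.arc b (a + n) := by
  by_contra! hcon
  simp only [arc, residue_add_self, not_and, not_forall, not_not] at hcon
  obtain ⟨x, hax, hxb, hx⟩ := hcon.1 hab hba h
  obtain ⟨y, hby, hya, hy⟩ := hcon.2 hba (by omega) h.symm
  have ha := h.not_isSingleton
  have hb := h.symm.not_isSingleton
  have hxa : a ≠ x := fun e => ha (e ▸ hx)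
  have hxb' : x ≠ b := fun e => hb (e ▸ hx)
  have hyb : b ≠ y := fun e => hb (e ▸ hy)
  have hya' : y ≠ a + n := fun e => ha (by rwa [e, residue_add_self] at hy)
  have he := equivalence_relTilde π.P
  exact ha ((he.symm (π.nc_tilde.of_residue he (by omega) (by omega) (by omega)
    (by omega : y < a + n) (Or.inl h.2) (Or.inr ⟨hx, hy⟩))).isSingleton hx)

theorem arc_add_period : π.arc (a + n) (b + n) ↔ π.arc a b := by
  have hshift : (∀ x, a + n ≤ x → x ≤ b + n → ¬ IsSingleton π.P (residue n x)) ↔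
      ∀ x, a ≤ x → x ≤ b → ¬ IsSingleton π.P (residue n x) :=
    ⟨fun h x hax hxb => by simpa using h (x + n) (by omega) (by omega),
      fun h x hax hxb => by
        rw [← sub_add_cancel x (n : ℤ), residue_add_self]
        exact h (x - n) (by omega) (by omega)⟩
  simp only [arc, residue_add_self, hshift, add_lt_add_iff_right]

theorem arc_left_unique (hac : π.arc a c) (hbc : π.arc b c) : a = b := by
  refine eq_of_residue_eq (hac.pairs.symm.right_unique hbc.pairs.symm) ?_ ?_ <;>
    linarith [hac.1, hac.2.1, hbc.1, hbc.2.1]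

theorem arc_right_unique (hab : π.arc a b) (hac : π.arc a c) : b = c := by
  refine eq_of_residue_eq (hab.pairs.right_unique hac.pairs) ?_ ?_ <;>
    linarith [hab.1, hab.2.1, hac.1, hac.2.1]

theorem arc.not_arc_right (hab : π.arc a b) : ¬ π.arc b c := by
  intro hbc
  have hca : c + 1 < a + n := lt_of_forall_not_isSingleton fun x hax hxc =>
    (le_total x b).elim (hab.2.2.2 x hax) fun hbx => hbc.2.2.2 x hbx hxc
  have := eq_of_residue_eq (hab.pairs.symm.right_unique hbc.pairs)
    (by linarith [hab.1, hbc.1]) (by omega)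
  linarith [hab.1, hbc.1]

theorem arc.not_arc_of_crossing (hac : π.arc a c) (hab : a < b) (hbc : b < c) (hcd : c < d) :
    ¬ π.arc b d := by
  intro hbd
  have hda : d + 1 < a + n := lt_of_forall_not_isSingleton fun x hax hxd =>
    (le_total x c).elim (hac.2.2.2 x hax) fun hcx => hbd.2.2.2 x (by omega) hxd
  exact not_pairs_of_crossing hab hbc hcd (by omega) hac.pairs hbd.pairs

theorem exists_arc_of_not_isSingleton (hx : ¬ IsSingleton π.P (residue n x)) :
    ∃ y, π.arc x y ∨ π.arc y x := by
  obtain ⟨j, hj⟩ := not_isSingleton_iff_exists_pairs.1 hx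
  obtain ⟨y, hxy, hyx, rfl⟩ := exists_residue_eq x j
  have hlt : x < y := hxy.lt_of_ne fun e => hj.1 (by rw [e])
  rcases arc_or_arc_of_pairs hlt hyx hj with h | h
  · exact ⟨y, Or.inl h⟩
  · refine ⟨y - n, Or.inr (arc_add_period.1 ?_)⟩
    rwa [sub_add_cancel]

theorem unmatched_arc_iff : Unmatched π.arc x ↔ IsSingleton π.P (residue n x) := by
  refine ⟨fun h => ?_, fun h y => ⟨fun hxy => hxy.pairs.not_isSingleton h,
    fun hyx => hyx.pairs.symm.not_isSingleton h⟩⟩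
  by_contra hx
  obtain ⟨y, hy⟩ := exists_arc_of_not_isSingleton hx
  exact hy.elim (h y).1 (h y).2

theorem arc.closedBetween (h : π.arc a b) : ClosedBetween π.arc a b := by
  intro x hax hxb
  obtain ⟨y, hy⟩ := exists_arc_of_not_isSingleton (h.2.2.2 x hax.le hxb.le)
  refine ⟨y, ?_, ?_, hy⟩
  · by_contra! hya
    have hyx : π.arc y x := hy.resolve_left fun hxy => by linarith [hxy.1]
    rcases hya.eq_or_lt with rfl | hya
    · exact hxb.ne (arc_right_unique hyx h)
    · exact hyx.not_arc_of_crossing hya hax hxb h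
  · by_contra! hby
    have hxy : π.arc x y := hy.resolve_right fun hyx => by linarith [hyx.1]
    rcases hby.eq_or_lt with rfl | hby
    · exact hax.ne (arc_left_unique h hxy)
    · exact h.not_arc_of_crossing hax hxb hby hxy

theorem isPeriodicArcDiagram_arc (π : HalfPairing n) : IsPeriodicArcDiagram n π.arc where
  lt h := h.1
  left_unique := arc_left_unique
  right_unique := arc_right_unique
  not_left_of_right h := h.not_arc_right
  closedBetween h := h.closedBetween
  add_period _ _ := arc_add_period
  exists_unmatched := by
    obtain ⟨x, -, -, hx⟩ := π.exists_isSingleton_mem_Ico 0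
    exact ⟨x, unmatched_arc_iff.2 hx⟩

end HalfPairing

/-- The relation on `[n]` induced by the arcs of a diagram on `ℤ`. -/
def PairsMod (n : ℕ) [NeZero n] (A : ℤ → ℤ → Prop) (i j : Fin n) : Prop :=
  ∃ a b, (A a b ∨ A b a) ∧ residue n a = i ∧ residue n b = j

theorem HalfPairing.pairsMod_arc_iff {n : ℕ} [NeZero n] {π : HalfPairing n} {i j : Fin n} :
    PairsMod n π.arc i j ↔ Pairs π i j := by
  constructor
  · rintro ⟨a, b, h | h, rfl, rfl⟩
    exacts [h.pairs, h.pairs.symm]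
  · intro h
    obtain ⟨b, hb⟩ := exists_arc_of_not_isSingleton (x := (i : ℕ))
      (by rw [residue_coe]; exact h.not_isSingleton)
    refine ⟨_, b, hb, residue_coe i, ?_⟩
    have hib : Pairs π i (residue n b) := by
      rw [← residue_coe i]
      exact hb.elim arc.pairs fun h => h.pairs.symm
    exact hib.right_unique h

theorem HalfPairing.arc_injective {n : ℕ} [NeZero n] :
    Function.Injective (HalfPairing.arc (n := n)) := fun π ρ h =>
  halfPairing_eq_of_pairs_iff fun i j => by rw [← pairsMod_arc_iff, ← pairsMod_arc_iff, h]

namespace HalfPairing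

variable {n : ℕ} [NeZero n] {π : HalfPairing n} {a b : ℤ}

theorem outOriented_residue_iff : OutOriented π (residue n a) ↔ IsOutward π.arc a := by
  constructor
  · rintro (h | ⟨j, hj, h⟩)
    · exact (unmatched_arc_iff.2 h).isOutward
    obtain ⟨b, hab, hba, rfl⟩ := exists_residue_eq a j
    refine π.isPeriodicArcDiagram_arc.isOutward_left (b := b)
      ⟨hab.lt_of_ne fun e => hj.1 (by rw [e]), hba, hj, fun x hax hxb => h _ ?_⟩
    exact (inCyc_residue_iff hab hba hax (by omega)).2 hxb
  · intro h
    by_cases ha : IsSingleton π.P (residue n a)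
    · exact Or.inl ha
    obtain ⟨b, hb⟩ := exists_arc_of_not_isSingleton ha
    obtain ⟨hab, hba, hpairs, hns⟩ := hb.resolve_right (h b)
    refine Or.inr ⟨_, hpairs, fun i hi => ?_⟩
    obtain ⟨x, hax, hxa, rfl⟩ := exists_residue_eq a i
    exact hns x hax ((inCyc_residue_iff hab.le hba hax hxa).1 hi)

theorem closedBetween_arc_iff (hba : b ≤ a + n) :
    ClosedBetween π.arc a b ↔
      ∀ x, a < x → x < b → ∃ y, a < y ∧ y < b ∧ Pairs π (residue n x) (residue n y) := by
  refine ⟨fun h x hax hxb => ?_, fun h => ?_⟩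
  · obtain ⟨y, hay, hyb, hy⟩ := h x hax hxb
    exact ⟨y, hay, hyb, hy.elim arc.pairs fun h => h.pairs.symm⟩
  have hns : ∀ x, a < x → x < b → ¬ IsSingleton π.P (residue n x) := fun x hax hxb =>
    let ⟨_, _, _, hy⟩ := h x hax hxb
    hy.not_isSingleton
  intro x hax hxb
  obtain ⟨y, hay, hyb, hxy⟩ := h x hax hxb
  refine ⟨y, hay, hyb, ?_⟩
  rcases lt_trichotomy x y with hlt | rfl | hlt
  · exact Or.inl ⟨hlt, by omega, hxy, fun z _ _ => hns z (by omega) (by omega)⟩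
  · exact absurd rfl hxy.1
  · exact Or.inr ⟨hlt, by omega, hxy.symm, fun z _ _ => hns z (by omega) (by omega)⟩

theorem covers_residue_iff (hab : a < b) (hba : b ≤ a + n) :
    Covers π (residue n a) (residue n b) ↔
      IsOutward π.arc a ∧ IsOutward π.arc b ∧ ClosedBetween π.arc a b := by
  rw [Covers, outOriented_residue_iff, outOriented_residue_iff, closedBetween_arc_iff hba]
  refine and_congr_right' (and_congr_right' ?_)
  rcases (Int.add_one_le_iff.2 hab).eq_or_lt with rfl | hlt
  · exact iff_of_true (Or.inl (cnext_residue a).symm) fun x _ _ => by omega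
  have hne : residue n b ≠ cnext (residue n a) := by
    rw [cnext_residue]
    exact fun h => hlt.ne' (eq_of_residue_eq h (by omega) (by omega))
  rw [or_iff_right hne, cnext_residue, cprev_residue]
  constructor
  · intro h x hax hxb
    obtain ⟨j, -, hj, hxj⟩ := h (residue n x)
      ((inCyc_residue_iff (by omega) (by omega) (by omega) (by omega)).2 (by omega))
    obtain ⟨y, hay, hya, rfl⟩ := exists_residue_eq (a + 1) j
    rw [inCyc_residue_iff (by omega) (by omega) hay hya] at hj
    exact ⟨y, by omega, by omega, hxj⟩
  · intro h i hi
    obtain ⟨x, hax, hxa, rfl⟩ := exists_residue_eq (a + 1) i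
    rw [inCyc_residue_iff (by omega) (by omega) hax hxa] at hi
    obtain ⟨y, hay, hyb, hxy⟩ := h x (by omega) (by omega)
    refine ⟨_, hxy.1.symm, ?_, hxy⟩
    exact (inCyc_residue_iff (by omega) (by omega) (by omega) (by omega)).2 (by omega)

end HalfPairing

namespace IsPeriodicArcDiagram

variable {n : ℕ} [NeZero n] {A : ℤ → ℤ → Prop} {a b c d : ℤ} {i j k : Fin n}

theorem le_add_period_of_closedBetween {p : ℤ} (hA : IsPeriodicArcDiagram p A) (hp : 0 < p)
    (h : ClosedBetween A a b) : b ≤ a + p := by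
  obtain ⟨x, hax, hxa, hx⟩ := hA.exists_unmatched_mem_Ico hp (a + 1)
  by_contra! hb
  exact h.not_unmatched (by omega) (by omega) hx

theorem pairsMod_residue_iff (hA : IsPeriodicArcDiagram n A) :
    PairsMod n A (residue n a) j ↔ ∃ b, (A a b ∨ A b a) ∧ residue n b = j := by
  refine ⟨?_, fun ⟨b, hb, hj⟩ => ⟨a, b, hb, rfl, hj⟩⟩
  rintro ⟨x, y, hxy, hx, rfl⟩
  obtain ⟨t, rfl⟩ := residue_eq_iff.1 hx
  exact ⟨y + t * n, by simpa only [hA.add_mul_period] using hxy, residue_add_mul y t⟩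

theorem pairsMod_right_unique (hA : IsPeriodicArcDiagram n A) (hij : PairsMod n A i j)
    (hik : PairsMod n A i k) : j = k := by
  obtain ⟨a, b, hab, rfl, rfl⟩ := hij
  obtain ⟨c, hac, rfl⟩ := hA.pairsMod_residue_iff.1 hik
  rcases hab with hab | hab <;> rcases hac with hac | hac
  · rw [hA.right_unique hab hac]
  · exact absurd hab (hA.not_left_of_right hac)
  · exact absurd hac (hA.not_left_of_right hab)
  · rw [hA.left_unique hab hac]

theorem arc_or_arc_of_pairsMod (hA : IsPeriodicArcDiagram n A) (hab : a < b) (hba : b < a + n)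
    (h : PairsMod n A (residue n a) (residue n b)) : A a b ∨ A b (a + n) := by
  have hn : (0 : ℤ) < n := by omega
  obtain ⟨c, hac | hca, hcb⟩ := hA.pairsMod_residue_iff.1 h
  · have hlt := hA.lt hac
    have hgt := hA.lt_add_period hn hac
    exact Or.inl (eq_of_residue_eq hcb (by omega) (by omega) ▸ hac)
  · have hlt := hA.lt hca
    have hgt := hA.lt_add_period hn hca
    rw [← residue_add_self] at hcb
    have := eq_of_residue_eq hcb (by omega) (by omega)
    exact Or.inr (this ▸ (hA.add_period c a).2 hca)

theorem pairsMod_ne (hA : IsPeriodicArcDiagram n A) (h : PairsMod n A i j) : i ≠ j := by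
  have hn : (0 : ℤ) < n := by exact_mod_cast Nat.pos_of_neZero n
  have hne : ∀ a b, A a b → residue n a ≠ residue n b := fun a b hab e => by
    have hlt := hA.lt hab
    have hgt := hA.lt_add_period hn hab
    exact hlt.ne (eq_of_residue_eq e (by omega) hgt)
  obtain ⟨a, b, hab | hba, rfl, rfl⟩ := h
  exacts [hne a b hab, (hne b a hba).symm]

theorem not_pairsMod_of_unmatched (hA : IsPeriodicArcDiagram n A) (ha : Unmatched A a) :
    ¬ PairsMod n A (residue n a) j := fun h =>
  let ⟨b, hb, _⟩ := hA.pairsMod_residue_iff.1 h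
  hb.elim (ha b).1 (ha b).2

/-- Of the two cyclic intervals bounded by a pair, the one under the arc is closed. -/
theorem exists_pairsMod_of_separated (hA : IsPeriodicArcDiagram n A) (hab : a < b) (hbc : b < c)
    (hcd : c < d) (hda : d < a + n) (hac : PairsMod n A (residue n a) (residue n c)) :
    (∃ y, a < y ∧ y < c ∧ PairsMod n A (residue n b) (residue n y)) ∨
      ∃ y, c < y ∧ y < a + n ∧ PairsMod n A (residue n d) (residue n y) := by
  rcases hA.arc_or_arc_of_pairsMod (hab.trans hbc) (hcd.trans hda) hac with h | h
  · obtain ⟨y, hay, hyc, hy⟩ := hA.closedBetween h b hab hbc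
    exact Or.inl ⟨y, hay, hyc, b, y, hy, rfl, rfl⟩
  · obtain ⟨y, hcy, hya, hy⟩ := hA.closedBetween h d hcd hda
    exact Or.inr ⟨y, hcy, hya, d, y, hy, rfl, rfl⟩

theorem not_pairsMod_of_crossing (hA : IsPeriodicArcDiagram n A) (hab : a < b) (hbc : b < c)
    (hcd : c < d) (hda : d < a + n) (hac : PairsMod n A (residue n a) (residue n c)) :
    ¬ PairsMod n A (residue n b) (residue n d) := by
  intro hbd
  have hdb : PairsMod n A (residue n d) (residue n b) :=
    let ⟨x, y, hxy, hx, hy⟩ := hbd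
    ⟨y, x, hxy.symm, hy, hx⟩
  rcases hA.exists_pairsMod_of_separated hab hbc hcd hda hac with
    ⟨y, hay, hyc, hy⟩ | ⟨y, hcy, hya, hy⟩
  · have := eq_of_residue_eq (hA.pairsMod_right_unique hbd hy) (by omega) (by omega)
    omega
  · have := eq_of_residue_eq (hA.pairsMod_right_unique hdb hy) (by omega) (by omega)
    omega

/-- The equivalence relation whose classes are the pairs and the unmatched points. -/
def setoid (hA : IsPeriodicArcDiagram n A) : Setoid (Fin n) where
  r i j := i = j ∨ PairsMod n A i j
  iseqv :=
    { refl := fun _ => Or.inl rfl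
      symm := fun h => h.imp Eq.symm fun ⟨a, b, hab, ha, hb⟩ => ⟨b, a, hab.symm, hb, ha⟩
      trans := by
        rintro i j k (rfl | hij) (rfl | hjk)
        · exact Or.inl rfl
        · exact Or.inr hjk
        · exact Or.inr hij
        · obtain ⟨a, b, hab, ha, hb⟩ := hij
          exact Or.inl (hA.pairsMod_right_unique ⟨b, a, hab.symm, hb, ha⟩ hjk) }

theorem rel_ofSetoid_iff (hA : IsPeriodicArcDiagram n A) :
    Rel (Finpartition.ofSetoid hA.setoid) i j ↔ i = j ∨ PairsMod n A i j := by
  rw [rel_iff_part_eq, eq_comm, ← Finpartition.mem_part_iff_part_eq_part _ (Finset.mem_univ j)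
    (Finset.mem_univ i), Finpartition.mem_part_ofSetoid_iff_rel]
  rfl

theorem rel_ofSetoid_iff_of_ne (hA : IsPeriodicArcDiagram n A) (hij : i ≠ j) :
    Rel (Finpartition.ofSetoid hA.setoid) i j ↔ PairsMod n A i j := by
  rw [hA.rel_ofSetoid_iff, or_iff_right hij]

theorem isSingleton_ofSetoid_iff (hA : IsPeriodicArcDiagram n A) :
    IsSingleton (Finpartition.ofSetoid hA.setoid) i ↔ ∀ j, ¬ PairsMod n A i j := by
  simp only [isSingleton_iff, hA.rel_ofSetoid_iff]
  refine forall_congr' fun j => ⟨fun h hj => hA.pairsMod_ne hj (h (Or.inr hj)).symm, fun h hj => ?_⟩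
  exact (hj.resolve_right h).symm

theorem nonCrossingRel_ofSetoid (hA : IsPeriodicArcDiagram n A) :
    NonCrossingRel (Rel (Finpartition.ofSetoid hA.setoid)) := by
  intro i j k l hij hjk hkl hik hjl
  rw [hA.rel_ofSetoid_iff_of_ne (by omega), ← residue_coe i, ← residue_coe k] at hik
  rw [hA.rel_ofSetoid_iff_of_ne (by omega), ← residue_coe j, ← residue_coe l] at hjl
  exact absurd hjl
    (hA.not_pairsMod_of_crossing (by omega) (by omega) (by omega) (by omega) hik)

theorem nonCrossingRel_relTilde_ofSetoid (hA : IsPeriodicArcDiagram n A) :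
    NonCrossingRel (RelTilde (Finpartition.ofSetoid hA.setoid)) := by
  rintro i j k l hij hjk hkl (hik | hik) (hjl | hjl)
  · exact Or.inl (hA.nonCrossingRel_ofSetoid i j k l hij hjk hkl hik hjl)
  · rw [hA.rel_ofSetoid_iff_of_ne (by omega), ← residue_coe i, ← residue_coe k] at hik
    rw [isSingleton_ofSetoid_iff, isSingleton_ofSetoid_iff, ← residue_coe j,
      ← residue_coe l] at hjl
    rcases hA.exists_pairsMod_of_separated (b := (j : ℕ)) (d := (l : ℕ)) (by omega) (by omega)
      (by omega) (by omega) hik with ⟨y, -, -, hy⟩ | ⟨y, -, -, hy⟩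
    exacts [absurd hy (hjl.1 _), absurd hy (hjl.2 _)]
  · rw [hA.rel_ofSetoid_iff_of_ne (by omega), ← residue_coe j, ← residue_coe l] at hjl
    rw [isSingleton_ofSetoid_iff, isSingleton_ofSetoid_iff, ← residue_coe i, ← residue_coe k,
      ← residue_add_self ((i : ℕ) : ℤ)] at hik
    rcases hA.exists_pairsMod_of_separated (b := (k : ℕ)) (d := (i : ℕ) + n) (by omega) (by omega)
      (by omega) (by omega) hjl with ⟨y, -, -, hy⟩ | ⟨y, -, -, hy⟩
    exacts [absurd hy (hik.2 _), absurd hy (hik.1 _)]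
  · exact Or.inr ⟨hik.1, hjl.1⟩

/-- The half-pairing of `[n]` obtained from a periodic arc diagram by reduction modulo the
period. -/
noncomputable def toHalfPairing (hA : IsPeriodicArcDiagram n A) : HalfPairing n where
  P := Finpartition.ofSetoid hA.setoid
  card_le B hB := by
    by_contra! hcard
    obtain ⟨i, hi, j, hj, k, hk, hij, hik, hjk⟩ := Finset.two_lt_card.1 hcard
    exact hjk (hA.pairsMod_right_unique ((hA.rel_ofSetoid_iff_of_ne hij).1 ⟨B, hB, hi, hj⟩)
      ((hA.rel_ofSetoid_iff_of_ne hik).1 ⟨B, hB, hi, hk⟩))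
  exists_singleton := by
    obtain ⟨x, hx⟩ := hA.exists_unmatched
    exact ⟨residue n x, hA.isSingleton_ofSetoid_iff.2 fun _ => hA.not_pairsMod_of_unmatched hx⟩
  nc := hA.nonCrossingRel_ofSetoid
  nc_tilde := hA.nonCrossingRel_relTilde_ofSetoid

theorem pairs_toHalfPairing_iff (hA : IsPeriodicArcDiagram n A) :
    Pairs hA.toHalfPairing i j ↔ PairsMod n A i j :=
  ⟨fun h => (hA.rel_ofSetoid_iff_of_ne h.1).1 h.2,
    fun h => ⟨hA.pairsMod_ne h, (hA.rel_ofSetoid_iff_of_ne (hA.pairsMod_ne h)).2 h⟩⟩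

theorem isSingleton_toHalfPairing_iff (hA : IsPeriodicArcDiagram n A) :
    IsSingleton hA.toHalfPairing.P (residue n a) ↔ Unmatched A a := by
  refine ⟨fun h b => ?_, fun h => hA.isSingleton_ofSetoid_iff.2 fun _ =>
    hA.not_pairsMod_of_unmatched h⟩
  have hb := hA.isSingleton_ofSetoid_iff.1 h (residue n b)
  rw [hA.pairsMod_residue_iff] at hb
  exact ⟨fun hab => hb ⟨b, Or.inl hab, rfl⟩, fun hba => hb ⟨b, Or.inr hba, rfl⟩⟩

theorem arc_toHalfPairing (hA : IsPeriodicArcDiagram n A) : hA.toHalfPairing.arc = A := by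
  have hn : (0 : ℤ) < n := by exact_mod_cast Nat.pos_of_neZero n
  ext a b
  simp only [HalfPairing.arc, hA.pairs_toHalfPairing_iff, hA.isSingleton_toHalfPairing_iff]
  constructor
  · rintro ⟨hab, hba, hpairs, hns⟩
    refine (hA.arc_or_arc_of_pairsMod hab hba hpairs).resolve_right fun h => ?_
    obtain ⟨x, hax, hxa, hx⟩ := hA.exists_unmatched_mem_Ico hn a
    rcases le_total x b with hxb | hbx
    exacts [hns x hax hxb hx, hA.not_unmatched h hbx hxa.le hx]
  · exact fun h => ⟨hA.lt h, hA.lt_add_period hn h, ⟨a, b, Or.inl h, rfl, rfl⟩,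
      fun x hax hxb => hA.not_unmatched h hax hxb⟩

end IsPeriodicArcDiagram

/-! ### The word of unmatched points -/

/-- The letters of the bi-infinite word `W` at the unmatched points of `[a, b)`: the analogue of
`throughWord`. -/
noncomputable def throughLetters {α : Type*} (A : ℤ → ℤ → Prop) (W : ℤ → α) (a b : ℤ) : List α :=
  ((intIco a b).filter (Unmatched A ·)).map W

section ThroughLetters

variable {α : Type*} {A : ℤ → ℤ → Prop} {a b c x : ℤ}

theorem throughLetters_append (W : ℤ → α) (hab : a ≤ b) (hbc : b ≤ c) :
    throughLetters A W a b ++ throughLetters A W b c = throughLetters A W a c := by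
  rw [throughLetters, throughLetters, ← List.map_append, ← List.filter_append,
    intIco_append hab hbc, throughLetters]

theorem throughLetters_eq_nil (W : ℤ → α) (h : ∀ x, a ≤ x → x < b → ¬ Unmatched A x) :
    throughLetters A W a b = [] := by
  simpa [throughLetters] using h

theorem throughLetters_succ_right (W : ℤ → α) (hab : a ≤ b) (hb : Unmatched A b) :
    throughLetters A W a (b + 1) = throughLetters A W a b ++ [W b] := by
  simp [throughLetters, intIco_succ_right hab, hb]

theorem IsArcDiagram.exists_unmatched_closedBetween (hA : IsArcDiagram A) (ha : Unmatched A a)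
    (hb : Unmatched A b) (hab : a < b) :
    ∃ e, a ≤ e ∧ e < b ∧ Unmatched A e ∧ ClosedBetween A e b := by
  obtain ⟨e, ⟨he, heb⟩, hgreatest⟩ :=
    Int.exists_greatest_of_bdd (P := fun e => Unmatched A e ∧ e < b) ⟨b, fun _ h => h.2.le⟩
      ⟨a, ha, hab⟩
  refine ⟨e, hgreatest a ⟨ha, hab⟩, heb, he, hA.closedBetween_of_unmatched he hb ?_⟩
  exact fun x hex hxb hx => hex.not_ge (hgreatest x ⟨hx, hxb⟩)

namespace IsPeriodicArcDiagram

variable {p : ℤ}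

theorem throughLetters_add_period {W : ℤ → α} (hA : IsPeriodicArcDiagram p A)
    (hW : Function.Periodic W p) (a b : ℤ) :
    throughLetters A W (a + p) (b + p) = throughLetters A W a b := by
  rw [throughLetters, throughLetters, ← map_add_intIco, List.filter_map, List.map_map]
  simp only [Function.comp_def, hA.unmatched_add_period, hW _]

/-- `c` and `d` are the first and last unmatched points of the period `[0, p)`. -/
theorem exists_unmatched_first_last (hA : IsPeriodicArcDiagram p A) (hp : 0 < p) :
    ∃ c d, 0 ≤ c ∧ c ≤ d ∧ d < p ∧ Unmatched A c ∧ Unmatched A d ∧ ClosedBetween A d (c + p) := by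
  obtain ⟨x, hx0, -, hx⟩ := hA.exists_unmatched_mem_Ico hp 0
  obtain ⟨c, ⟨hc0, hc⟩, hleast⟩ := Int.exists_least_of_bdd (P := fun c => 0 ≤ c ∧ Unmatched A c)
    ⟨0, fun _ h => h.1⟩ ⟨x, hx0, hx⟩
  obtain ⟨d, hcd, hdc, hd, hclosed⟩ := hA.exists_unmatched_closedBetween hc
    ((hA.unmatched_add_period c).2 hc) (by omega)
  refine ⟨c, d, hc0, hcd, ?_, hc, hd, hclosed⟩
  by_contra! hpd
  have hprev : Unmatched A (d - p) := by rwa [← hA.unmatched_add_period, sub_add_cancel]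
  have := hleast (d - p) ⟨by omega, hprev⟩
  omega

theorem throughLetters_period_eq (hA : IsPeriodicArcDiagram p A) (W : ℤ → α) {c d : ℤ}
    (hc0 : 0 ≤ c) (hcd : c ≤ d) (hdp : d < p) (hclosed : ClosedBetween A d (c + p)) :
    throughLetters A W 0 p = throughLetters A W c (d + 1) := by
  have hstart : throughLetters A W 0 c = [] := throughLetters_eq_nil W fun x hx0 hxc hx =>
    hclosed.not_unmatched (by omega) (by omega) ((hA.unmatched_add_period x).2 hx)
  have hend : throughLetters A W (d + 1) p = [] := throughLetters_eq_nil W fun x hdx hxp =>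
    hclosed.not_unmatched (by omega) (by omega)
  rw [← throughLetters_append W hc0 (by omega : c ≤ p),
    ← throughLetters_append W (by omega : c ≤ d + 1) (by omega : d + 1 ≤ p), hstart, hend,
    List.nil_append, List.append_nil]

end IsPeriodicArcDiagram

end ThroughLetters

section CyclicReduction

variable {N : ℕ}

theorem cycReducesTo_append_invRev (X V : List (Letter N)) :
    CycReducesTo (X ++ V ++ FreeGroup.invRev X) V := by
  induction X with
  | nil => simp [FreeGroup.invRev, CycReducesTo, Relation.ReflTransGen.refl]
  | cons a X ih =>
    refine Relation.ReflTransGen.head (Or.inr ⟨a, X ++ V ++ FreeGroup.invRev X, ?_, rfl⟩) ih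
    simp [FreeGroup.invRev, linv]

theorem cycReducesTo_reduce_of_mk_append_eq_one (V : List (Letter N)) {X Y : List (Letter N)}
    (h : FreeGroup.mk (Y ++ X) = 1) : CycReducesTo (X ++ V ++ Y) (FreeGroup.reduce V) := by
  have hY : FreeGroup.reduce Y = FreeGroup.invRev (FreeGroup.reduce X) := by
    rw [← FreeGroup.toWord_mk, ← FreeGroup.toWord_mk, ← FreeGroup.toWord_inv,
      eq_inv_of_mul_eq_one_left (FreeGroup.mul_mk.trans h)]
  have hred : FreeGroup.Red (X ++ V ++ Y) (FreeGroup.reduce X ++ FreeGroup.reduce V ++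
      FreeGroup.reduce Y) :=
    (FreeGroup.reduce.red.append_append FreeGroup.reduce.red).append_append FreeGroup.reduce.red
  rw [hY] at hred
  exact (Relation.ReflTransGen.mono (fun _ _ => Or.inl) _ _ hred).trans
    (cycReducesTo_append_invRev _ _)

theorem CycReducesTo.eq_nil {v : List (Letter N)} (h : CycReducesTo [] v) : v = [] := by
  induction h with
  | refl => rfl
  | tail _ hstep ih =>
    subst ih
    rcases hstep with h | ⟨l, m, h, -⟩
    · exact absurd h FreeGroup.Red.not_step_nil
    · simp at h

namespace IsAdmissibleDiagram

variable {W : ℤ → Letter N} {A : ℤ → ℤ → Prop} {p c d : ℤ}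

theorem reduce_segment_eq_throughLetters (hA : IsArcDiagram A) (hW : IsAdmissibleDiagram W A)
    (hc : Unmatched A c) (hd : Unmatched A d) (hcd : c ≤ d) :
    FreeGroup.reduce (segment W c (d + 1)) = throughLetters A W c (d + 1) := by
  suffices hstack : stack W c (d + 1) = (throughLetters A W c (d + 1)).reverse by
    rwa [stack, pushAll_nil_eq_reverse_toWord, List.reverse_inj, FreeGroup.toWord_mk] at hstack
  induction hn : (d - c).toNat using Nat.strong_induction_on generalizing d with
  | _ n ih =>
    rw [hW.stack_succ_eq_cons_of_isOutward hA hc hcd hd.isOutward,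
      throughLetters_succ_right W hcd hd, List.reverse_concat, List.cons_inj_right]
    rcases hcd.eq_or_lt with rfl | hcd
    · simp [stack, throughLetters]
    obtain ⟨e, hce, hed, he, hclosed⟩ := hA.exists_unmatched_closedBetween hc hd hcd
    have hmk := hA.mk_segment_closedBetween_eq_one (fun _ _ => hW.inv) hed hclosed
    have hnil : throughLetters A W (e + 1) d = [] := throughLetters_eq_nil W fun x hex hxd =>
      hclosed.not_unmatched (by omega) hxd
    rw [stack_eq_of_mk_segment_eq_one (by omega) hed hmk, ih _ (by omega) he hce rfl,
      ← throughLetters_append W (by omega : c ≤ e + 1) hed, hnil, List.append_nil]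

theorem cycReduced_throughLetters (hA : IsPeriodicArcDiagram p A) (hW : IsAdmissibleDiagram W A)
    (hWp : Function.Periodic W p) (hp : 0 < p) : CycReduced (throughLetters A W 0 p) := by
  obtain ⟨c, d, hc0, hcd, hdp, hc, hd, hclosed⟩ := hA.exists_unmatched_first_last hp
  have hdouble : throughLetters A W 0 p ++ throughLetters A W 0 p =
      FreeGroup.reduce (segment W c (d + p + 1)) := by
    have hnil : throughLetters A W (d + 1) (c + p) = [] := throughLetters_eq_nil W fun x hdx hxc =>
      hclosed.not_unmatched (by omega) hxc
    rw [hW.reduce_segment_eq_throughLetters hA.toIsArcDiagram hc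
        ((hA.unmatched_add_period d).2 hd) (by omega),
      ← throughLetters_append W (by omega : c ≤ d + 1) (by omega : d + 1 ≤ d + p + 1),
      ← throughLetters_append W (by omega : d + 1 ≤ c + p) (by omega : c + p ≤ d + p + 1), hnil,
      List.nil_append, add_right_comm, hA.throughLetters_add_period hWp,
      hA.throughLetters_period_eq W hc0 hcd hdp hclosed]
  rw [CycReduced, hdouble]
  exact isReduced_iff_linReduced.1 (FreeGroup.IsReduced.of_reduce_eq FreeGroup.reduce.idem)

theorem cycReducesTo_throughLetters (hA : IsPeriodicArcDiagram p A)
    (hW : IsAdmissibleDiagram W A) (hWp : Function.Periodic W p) (hp : 0 < p) :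
    CycReducesTo (segment W 0 p) (throughLetters A W 0 p) := by
  obtain ⟨c, d, hc0, hcd, hdp, hc, hd, hclosed⟩ := hA.exists_unmatched_first_last hp
  have hwrap : FreeGroup.mk (segment W (d + 1) p ++ segment W 0 c) = 1 := by
    rw [← segment_add_period hWp 0 c, zero_add, segment_append W hdp (by omega)]
    exact hA.mk_segment_closedBetween_eq_one (fun _ _ => hW.inv) (by omega) hclosed
  rw [hA.throughLetters_period_eq W hc0 hcd hdp hclosed,
    ← hW.reduce_segment_eq_throughLetters hA.toIsArcDiagram hc hd hcd,
    ← segment_append W (by omega : 0 ≤ d + 1) hdp,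
    ← segment_append W hc0 (by omega : c ≤ d + 1)]
  exact cycReducesTo_reduce_of_mk_append_eq_one _ hwrap

end IsAdmissibleDiagram

end CyclicReduction

/-! ### Lifting the word -/

/-- The bi-infinite periodic word `⋯ w w w ⋯`, with a copy of `w` starting at `0`. -/
def periodize {α : Type*} {n : ℕ} [NeZero n] (w : Fin n → α) (k : ℤ) : α := w (residue n k)

theorem throughFinset_sort {n : ℕ} (π : HalfPairing n) :
    (throughFinset π).sort (· ≤ ·) = (List.finRange n).filter (IsSingleton π.P ·) := by
  rw [show throughFinset π = ((List.finRange n).filter (IsSingleton π.P ·)).toFinset by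
    ext; simp [throughFinset]]
  exact (List.toFinset_sort (· ≤ ·) ((List.nodup_finRange n).filter _)).2
    (((List.pairwise_lt_finRange n).imp le_of_lt).filter _)

section Periodize

variable {α : Type*} {N n : ℕ} [NeZero n]

theorem periodic_periodize (w : Fin n → α) : Function.Periodic (periodize w) n := fun k => by
  rw [periodize, residue_add_self, periodize]

theorem segment_periodize (w : Fin n → α) : segment (periodize w) 0 n = List.ofFn w := by
  rw [segment, intIco_zero_natCast, List.map_map, List.ofFn_eq_map]
  exact List.map_congr_left fun i _ => congrArg w (residue_coe i)

theorem throughWord_eq_throughLetters (w : Fin n → Letter N) (π : HalfPairing n) :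
    throughWord w π = throughLetters π.arc (periodize w) 0 n := by
  rw [throughWord, throughFinset_sort, throughLetters, intIco_zero_natCast, List.filter_map,
    List.map_map]
  simp only [Function.comp_def, HalfPairing.unmatched_arc_iff, periodize, residue_coe]

theorem isAdmissibleDiagram_arc_iff {w : Fin n → Letter N} {π : HalfPairing n} :
    IsAdmissibleDiagram (periodize w) π.arc ↔
      (∀ i j, Pairs π i j → w i = linv (w j)) ∧ ∀ i j, Covers π i j → w i ≠ linv (w j) := by
  have hn : (0 : ℤ) < n := by exact_mod_cast Nat.pos_of_neZero n
  refine ⟨fun hW => ⟨fun i j hij => ?_, fun i j hij => ?_⟩, fun ⟨hpairs, hcovers⟩ =>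
    ⟨fun hab => hpairs _ _ hab.pairs, fun hab ha hb hclosed => hcovers _ _ ?_⟩⟩
  · obtain ⟨a, b, hab | hba, rfl, rfl⟩ := HalfPairing.pairsMod_arc_iff.2 hij
    · exact hW.inv hab
    · exact (linv_linv _).symm.trans (congrArg linv (hW.inv hba).symm)
  · obtain ⟨b, hib, hbi, rfl⟩ := exists_residue_eq ((i : ℕ) + 1) j
    rw [← residue_coe i] at hij ⊢
    obtain ⟨ha, hb, hclosed⟩ := (HalfPairing.covers_residue_iff hib (by omega)).1 hij
    exact hW.ne hib ha hb hclosed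
  · exact (HalfPairing.covers_residue_iff hab
      (π.isPeriodicArcDiagram_arc.le_add_period_of_closedBetween hn hclosed)).2 ⟨ha, hb, hclosed⟩

theorem admissible_iff_isAdmissibleDiagram_arc {w : Fin n → Letter N} {π : HalfPairing n} :
    Admissible w π ↔ IsAdmissibleDiagram (periodize w) π.arc := by
  have hn : (0 : ℤ) < n := by exact_mod_cast Nat.pos_of_neZero n
  rw [Admissible, IsWPairing, throughWord_eq_throughLetters, ← segment_periodize]
  refine ⟨fun h => isAdmissibleDiagram_arc_iff.2 ⟨h.1.1, h.2⟩, fun hW => ?_⟩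
  obtain ⟨hpairs, hcovers⟩ := isAdmissibleDiagram_arc_iff.1 hW
  exact ⟨⟨hpairs,
    hW.cycReducesTo_throughLetters π.isPeriodicArcDiagram_arc (periodic_periodize w) hn,
    hW.cycReduced_throughLetters π.isPeriodicArcDiagram_arc (periodic_periodize w) hn⟩, hcovers⟩

end Periodize

/-- Every word of length `n` whose cyclic reduction has positive length has a
unique `w`-admissible non-crossing half-pairing on `[n]`. -/
theorem existsUnique_admissible_halfPairing (N n : ℕ) (w : Fin n → Letter N)
    (v : List (Letter N)) (hv : CycReducesTo (List.ofFn w) v) (hvc : CycReduced v)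
    (hvpos : 0 < v.length) :
    ∃! π : HalfPairing n, Admissible w π := by
  have hn : NeZero n := ⟨by
    rintro rfl
    rw [List.ofFn_zero] at hv
    simp [hv.eq_nil] at hvpos⟩
  have hgrow := tendsto_norm_pow_of_cycReducesTo hv hvc hvpos
  rw [← segment_periodize] at hgrow
  obtain ⟨A, ⟨hA, hWA⟩, huniq⟩ := existsUnique_admissibleDiagram (periodic_periodize w)
    (by exact_mod_cast Nat.pos_of_neZero n) hgrow
  refine ⟨hA.toHalfPairing, admissible_iff_isAdmissibleDiagram_arc.2 ?_,
    fun π hπ => HalfPairing.arc_injective ?_⟩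
  · rwa [hA.arc_toHalfPairing]
  · rw [hA.arc_toHalfPairing]
    exact huniq _ ⟨π.isPeriodicArcDiagram_arc, admissible_iff_isAdmissibleDiagram_arc.1 hπ⟩

end NCC
end

section
/- Cycle Lemma (Dvoretsky–Motzkin): Let ε_1, ..., ε_n be a string of +1's and -1's and let k = ε_1 + ⋯ + ε_n. If k > 0, then exactly k of the n cyclic permutations of the string ε_1, ..., ε_n are dominating. -/
/-!
Extend the string periodically to all of `ℕ` and let `S m` be the sum of its first `m` entries, so
that `S (m + n) = S m + k`. Since `k ≥ 0`, the rotation starting at `i` is dominating exactly when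
`S i < S m` for every `m > i`. Let `M i` be the minimum of `S` over `[i, ∞)`. As no step of `S`
exceeds `1`, the difference `M (i + 1) - M i` is `1` if the rotation at `i` is dominating and `0`
otherwise. Summing over `i < n`, the number of dominating rotations is `M n - M 0 = k`.
-/

namespace CycleLemma

/-- A string of `±1`'s is dominating if every nonempty initial partial sum is
strictly positive. -/
def Dominating (l : List ℤ) : Prop :=
  ∀ p, p <+: l → p ≠ [] → 0 < p.sum

section TailMin

variable {α : Type*}

/-- The sequence `S` is strictly smaller at `i` than at all later indices. For the partial sums of a
periodic string, these are the indices at which the dominating rotations start. -/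
def IsStrictTailMin [LT α] (S : ℕ → α) (i : ℕ) : Prop :=
  ∀ m, i < m → S i < S m

/-- The infimum of the sequence `S` over the indices `≥ i`, taken in a conditionally complete
lattice and therefore meaningful only if `S` is bounded below. -/
noncomputable def tailInf [InfSet α] (S : ℕ → α) (i : ℕ) : α :=
  ⨅ m, S (m + i)

lemma isStrictTailMin_iff_forall_le_add [Preorder α] {S : ℕ → α} {n : ℕ} (hn : n ≠ 0)
    (hS : ∀ m, S m ≤ S (m + n)) (i : ℕ) :
    IsStrictTailMin S i ↔ ∀ m, i < m → m ≤ i + n → S i < S m := by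
  refine ⟨fun h m him _ => h m him, fun h m => ?_⟩
  induction m using Nat.strong_induction_on with
  | _ m ih =>
    intro him
    rcases le_or_gt m (i + n) with hle | hgt
    · exact h m him hle
    · obtain ⟨m, rfl⟩ := Nat.exists_eq_add_of_le' (show n ≤ m by lia)
      exact (ih m (by lia) (by lia)).trans_le (hS m)

lemma apply_mod_le [Preorder α] {S : ℕ → α} {n : ℕ} (hS : ∀ m, S m ≤ S (m + n)) (m : ℕ) :
    S (m % n) ≤ S m := by
  have le_add_mul (r q : ℕ) : S r ≤ S (r + n * q) := by
    induction q with
    | zero => exact le_rfl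
    | succ q ih => simpa only [Nat.mul_succ, add_assoc] using ih.trans (hS _)
  simpa only [Nat.mod_add_div] using le_add_mul (m % n) (m / n)

lemma bddBelow_range_of_le_add [Preorder α] [IsCodirectedOrder α] {S : ℕ → α} {n : ℕ} (hn : n ≠ 0)
    (hS : ∀ m, S m ≤ S (m + n)) : BddBelow (Set.range S) := by
  have : Nonempty α := ⟨S 0⟩
  obtain ⟨b, hb⟩ := ((Set.finite_Iio n).image S).bddBelow
  refine ⟨b, ?_⟩
  rintro _ ⟨m, rfl⟩
  exact (hb ⟨m % n, Nat.mod_lt m (Nat.pos_of_ne_zero hn), rfl⟩).trans (apply_mod_le hS m)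

lemma bddBelow_range_add_right [Preorder α] {S : ℕ → α} (hS : BddBelow (Set.range S)) (i : ℕ) :
    BddBelow (Set.range fun m => S (m + i)) :=
  hS.mono (Set.range_comp_subset_range (· + i) S)

lemma le_tailInf_iff [ConditionallyCompleteLattice α] {S : ℕ → α} (hS : BddBelow (Set.range S))
    {i : ℕ} {a : α} : a ≤ tailInf S i ↔ ∀ m, i ≤ m → a ≤ S m := by
  rw [tailInf, le_ciInf_iff (bddBelow_range_add_right hS i)]
  refine ⟨fun h m him => ?_, fun h m => h _ (Nat.le_add_left i m)⟩
  simpa only [Nat.sub_add_cancel him] using h (m - i)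

lemma tailInf_le [ConditionallyCompleteLattice α] {S : ℕ → α} (hS : BddBelow (Set.range S))
    {i m : ℕ} (him : i ≤ m) : tailInf S i ≤ S m :=
  (le_tailInf_iff hS).mp le_rfl m him

lemma tailInf_eq_inf_tailInf_succ [ConditionallyCompleteLattice α] {S : ℕ → α}
    (hS : BddBelow (Set.range S)) (i : ℕ) : tailInf S i = S i ⊓ tailInf S (i + 1) := by
  refine eq_of_forall_le_iff fun a => ?_
  rw [le_inf_iff, le_tailInf_iff hS, le_tailInf_iff hS]
  refine ⟨fun h => ⟨h i le_rfl, fun m him => h m (Nat.le_of_succ_le him)⟩, fun h m him => ?_⟩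
  rcases him.eq_or_lt with rfl | hlt
  exacts [h.1, h.2 m hlt]

lemma tailInf_add [ConditionallyCompleteLattice α] [AddGroup α] [AddRightMono α] {S : ℕ → α}
    (hS : BddBelow (Set.range S)) {n : ℕ} {k : α} (hper : ∀ m, S (m + n) = S m + k) (i : ℕ) :
    tailInf S (i + n) = tailInf S i + k := by
  simp only [tailInf, ← add_assoc, hper, ciInf_add (bddBelow_range_add_right hS i)]

lemma isStrictTailMin_iff_lt_tailInf {S : ℕ → ℤ} (hS : BddBelow (Set.range S)) (i : ℕ) :
    IsStrictTailMin S i ↔ S i < tailInf S (i + 1) := by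
  rw [Int.lt_iff_add_one_le, le_tailInf_iff hS]
  rfl

open scoped Classical in
lemma tailInf_succ_sub_tailInf {S : ℕ → ℤ} (hS : BddBelow (Set.range S))
    (hstep : ∀ m, S (m + 1) ≤ S m + 1) (i : ℕ) :
    tailInf S (i + 1) - tailInf S i = if IsStrictTailMin S i then 1 else 0 := by
  rw [isStrictTailMin_iff_lt_tailInf hS, tailInf_eq_inf_tailInf_succ hS i]
  have hle : tailInf S (i + 1) ≤ S i + 1 := (tailInf_le hS le_rfl).trans (hstep i)
  split_ifs with h
  · rw [inf_eq_left.mpr h.le]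
    lia
  · rw [inf_eq_right.mpr (not_lt.mp h), sub_self]

open scoped Classical in
lemma card_filter_isStrictTailMin {S : ℕ → ℤ} (hS : BddBelow (Set.range S))
    (hstep : ∀ m, S (m + 1) ≤ S m + 1) (n : ℕ) :
    (((Finset.range n).filter (IsStrictTailMin S)).card : ℤ) = tailInf S n - tailInf S 0 := by
  simp only [Finset.natCast_card_filter, ← tailInf_succ_sub_tailInf hS hstep, Finset.sum_range_sub]

end TailMin

section PeriodicSum

variable {M : Type*} [AddCommMonoid M]

/-- The sum of the first `m` entries of the periodic extension of the list `l`. The default value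
`0` of `getD` is taken only if `l` is empty. -/
def periodicSum (l : List M) (m : ℕ) : M :=
  ∑ j ∈ Finset.range m, l.getD (j % l.length) 0

lemma periodicSum_succ {l : List M} (hl : l ≠ []) (m : ℕ) :
    periodicSum l (m + 1) = periodicSum l m +
      l[m % l.length]'(Nat.mod_lt m (List.length_pos_iff.mpr hl)) := by
  rw [periodicSum, Finset.sum_range_succ, List.getD_eq_getElem, periodicSum]

lemma periodicSum_add_sum_take_rotate (l : List M) (i : ℕ) {j : ℕ} (hj : j ≤ l.length) :
    periodicSum l i + ((l.rotate i).take j).sum = periodicSum l (i + j) := by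
  induction j with
  | zero => simp
  | succ j ih =>
    have hl : l ≠ [] := List.length_pos_iff.mp (by lia)
    have hlt : j < (l.rotate i).length := by simpa using hj
    simp only [List.sum_take_succ _ _ hlt, ← add_assoc, ih (by lia), periodicSum_succ hl,
      List.getElem_rotate, add_comm j i]

lemma periodicSum_add_length (l : List M) (m : ℕ) :
    periodicSum l (m + l.length) = periodicSum l m + l.sum := by
  rw [← periodicSum_add_sum_take_rotate l m le_rfl, List.take_of_length_le (by simp),
    (l.rotate_perm m).sum_eq]

end PeriodicSum

lemma dominating_iff_sum_take_pos {l : List ℤ} :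
    Dominating l ↔ ∀ j, 0 < j → j ≤ l.length → 0 < (l.take j).sum := by
  constructor
  · intro h j hj hjl
    exact h _ (l.take_prefix j) (List.length_pos_iff.mp (by rw [List.length_take]; lia))
  · intro h p hp hne
    rw [List.prefix_iff_eq_take.mp hp]
    exact h p.length (List.length_pos_iff.mpr hne) hp.length_le

lemma dominating_rotate_iff_periodicSum_lt (l : List ℤ) (i : ℕ) :
    Dominating (l.rotate i) ↔
      ∀ m, i < m → m ≤ i + l.length → periodicSum l i < periodicSum l m := by
  rw [dominating_iff_sum_take_pos, List.length_rotate]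
  constructor
  · intro h m him hm
    obtain ⟨j, rfl⟩ := Nat.exists_eq_add_of_le him.le
    have hj : j ≤ l.length := by lia
    rw [← periodicSum_add_sum_take_rotate l i hj]
    exact lt_add_of_pos_right _ (h j (by lia) hj)
  · intro h j hj hjl
    have hlt := h (i + j) (by lia) (by lia)
    rwa [← periodicSum_add_sum_take_rotate l i hjl, lt_add_iff_pos_right] at hlt

open scoped Classical in
theorem cycle_lemma_general (ε : List ℤ) (hε : ∀ x ∈ ε, x ≤ 1) (hsum : 0 ≤ ε.sum) :
    (((Finset.range ε.length).filter (fun i => Dominating (ε.rotate i))).card : ℤ) = ε.sum := by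
  rcases eq_or_ne ε [] with rfl | hne
  · simp
  have hlen : ε.length ≠ 0 := mt List.length_eq_zero_iff.mp hne
  have hper := periodicSum_add_length ε
  have hmono (m : ℕ) : periodicSum ε m ≤ periodicSum ε (m + ε.length) := by
    rw [hper]
    exact le_add_of_nonneg_right hsum
  have hbdd : BddBelow (Set.range (periodicSum ε)) := bddBelow_range_of_le_add hlen hmono
  have hstep (m : ℕ) : periodicSum ε (m + 1) ≤ periodicSum ε m + 1 := by
    rw [periodicSum_succ hne]
    exact add_le_add_right (hε _ (List.getElem_mem _)) _
  have hdom (i : ℕ) : Dominating (ε.rotate i) ↔ IsStrictTailMin (periodicSum ε) i := by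
    rw [dominating_rotate_iff_periodicSum_lt, isStrictTailMin_iff_forall_le_add hlen hmono]
  have htail := tailInf_add hbdd hper 0
  rw [zero_add] at htail
  simp only [hdom, card_filter_isStrictTailMin hbdd hstep, htail, add_sub_cancel_left]

open scoped Classical in
/-- **The Cycle Lemma** of Dvoretsky and Motzkin: if `ε_1, …, ε_n` is a string
of `±1`'s with sum `k > 0`, then exactly `k` of its `n` cyclic permutations are
dominating. -/
theorem cycle_lemma (ε : List ℤ) (hε : ∀ x ∈ ε, x = 1 ∨ x = -1)
    (k : ℤ) (hk : k = ε.sum) (hkpos : 0 < k) :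
    (((Finset.range ε.length).filter (fun i => Dominating (ε.rotate i))).card : ℤ) = k := by
  subst hk
  exact cycle_lemma_general ε (fun x hx => by rcases hε x hx with rfl | rfl <;> decide) hkpos.le

end CycleLemma
end
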